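/- Let H > 0, r₀ > 0 and M ≥ 1. There exists R > 0, depending only on H, M and r₀, such that for every open set Ω ⊆ ℝ², every solution u of (CMC) on Ω, and every point P ∈ Ω with the closed disk of center P and radius r₀ contained in Ω and with W_u(P) ≤ M, one has W_u(Q) ≤ 2M for every Q with |Q − P| < R. -/

import Mathlib

/-!
The solution is reparametrised by a map `ψ` of Lewy type, in which its Gauss map has bounded
Dirichlet energy; a Courant-Lebesgue argument and the comparison principle then make the Gauss map
nearly constant near `P`.

Normalise `P = 0`, `u 0 = 0`.  By the mean curvature equation, the two forms `m₁ dx + m₂ dy` and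
`m₂ dx + m₃ dy`, with `m₁ = 1 + 2Hu + (1 + u_x²) / W`, `m₂ = u_x u_y / W` and
`m₃ = 1 + 2Hu + (1 + u_y²) / W`, are closed, hence are the differentials of the components of a map
`ψ` (`CMCDisk.exists_psi`).  As long as `|2Hu| ≤ 1/2`, the differential of `ψ` dominates the metric
of the graph, so lifting rays through `ψ` yields a section `s` of `ψ` over a ball whose radius
depends only on `H` and `r₀` (`CMCDisk.exists_section`).  The gradient of `u` does not enter.

In the parameter `k`, the Gauss map `N` takes values in the open upper hemisphere and satisfies
`|DN|² ≤ 400 H² - 100 Jac N` (`Chart.energy_le`), a version of `|A|² = 4H² - 2K` distorted by the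
bounded distance of `ψ` to being conformal.  The area form of the open hemisphere has a bounded
primitive, so the Jacobian can be integrated by parts against a cutoff function and the Dirichlet
energy of `N` is bounded by a constant (`energy_bound`).  Therefore some circle of radius bounded
below is mapped by `N` into a small set (`exists_good_circle`).

The comparison principle for `u` and its translates shows that a half-space through the origin
containing `N` on the circle contains `N` on the whole disc (`Chart.halfspace`).  Hence `N` stays
close to its boundary values, so `1 / W = N₃` is nearly constant on the disc, and `W ≤ M` at the
centre gives `W ≤ 2M` on the disc (`exists_disc_W_le`).  Where `W ≤ 2M`, the differential of `ψ` is
bounded, so the image under `s` of the parameter disc contains a disc of the plane of radius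
depending only on `H`, `M` and `r₀` (`Chart.W_le_of_disc`).
-/

open Real MeasureTheory Filter Set

noncomputable section

/-- Euclidean norm on `ℝ × ℝ`. -/
def enorm2 (p : ℝ × ℝ) : ℝ := Real.sqrt (p.1 ^ 2 + p.2 ^ 2)

/-- Partial derivative in the `x` direction. -/
def pdx (u : ℝ × ℝ → ℝ) (p : ℝ × ℝ) : ℝ := fderiv ℝ u p (1, 0)

/-- Partial derivative in the `y` direction. -/
def pdy (u : ℝ × ℝ → ℝ) (p : ℝ × ℝ) : ℝ := fderiv ℝ u p (0, 1)

/-- The area element `W_u = √(1 + |∇u|²)`. -/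
def Wgraph (u : ℝ × ℝ → ℝ) (p : ℝ × ℝ) : ℝ :=
  Real.sqrt (1 + (pdx u p) ^ 2 + (pdy u p) ^ 2)

/-- Upward unit normal of the graph of `u`. -/
def normalVec (u : ℝ × ℝ → ℝ) (p : ℝ × ℝ) : ℝ × ℝ × ℝ :=
  (-pdx u p / Wgraph u p, -pdy u p / Wgraph u p, 1 / Wgraph u p)

/-- `u` is a (C²) solution of the constant mean curvature `H` equation on `Ω`. -/
def IsCMCSolution (H : ℝ) (Ω : Set (ℝ × ℝ)) (u : ℝ × ℝ → ℝ) : Prop :=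
  ContDiffOn ℝ 2 u Ω ∧ ∀ p ∈ Ω,
    (1 + (pdy u p) ^ 2) * pdx (fun q => pdx u q) p
      - 2 * (pdx u p) * (pdy u p) * pdy (fun q => pdx u q) p
      + (1 + (pdx u p) ^ 2) * pdy (fun q => pdy u q) p
    = 2 * H * (1 + (pdx u p) ^ 2 + (pdy u p) ^ 2) ^ ((3 : ℝ) / 2)

/-- `C` is a divergence line of the sequence `u` on `Ω`. -/
def IsDivergenceLine (H : ℝ) (Ω : Set (ℝ × ℝ)) (u : ℕ → ℝ × ℝ → ℝ)
    (C : Set (ℝ × ℝ)) : Prop :=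
  ∃ z₁ : ℝ × ℝ, C ⊆ Ω ∧ (∀ q ∈ C, enorm2 (q - z₁) = 1 / (2 * H)) ∧
    IsConnected C ∧ C.Nontrivial ∧
    ∃ φ : ℕ → ℕ, StrictMono φ ∧ ∀ Q ∈ C,
      Tendsto (fun n => normalVec (u (φ n)) Q) atTop
        (nhds (2 * H * (z₁.1 - Q.1), 2 * H * (z₁.2 - Q.2), 0))

namespace CMCGradient

open Topology

/-! ### Integrals of Jacobians -/

/-- The integral of a Jacobian `{F, g}` of compactly supported `C¹` functions vanishes.  No second
derivative is available; instead, the mixed second derivatives at `0` of the convolution of `F` with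
the reflection of `g` are `∫ F_x g_y` and `∫ F_y g_x` up to sign, and they agree by symmetry. -/
lemma integral_jacobian_eq_zero {F g : ℝ × ℝ → ℝ} (hF : ContDiff ℝ 1 F) (hg : ContDiff ℝ 1 g)
    (hFc : HasCompactSupport F) (hgc : HasCompactSupport g) :
    ∫ z, (pdx F z * pdy g z - pdy F z * pdx g z) = 0 := by
  set b : ℝ × ℝ → ℝ := fun z => g (-z) with hb
  have hbC : ContDiff ℝ 1 b := hg.comp contDiff_neg
  have hbc : HasCompactSupport b := hgc.comp_homeomorph (Homeomorph.neg _)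
  have hDF : Continuous (fderiv ℝ F) := hF.continuous_fderiv one_ne_zero
  have hDb : Continuous (fderiv ℝ b) := hbC.continuous_fderiv one_ne_zero
  have hDg : Continuous (fderiv ℝ g) := hg.continuous_fderiv one_ne_zero
  have h1 := fun y => hbc.hasFDerivAt_convolution_right (μ := volume) (ContinuousLinearMap.mul ℝ ℝ)
    (hF.continuous.locallyIntegrable) hbC y
  have h2 := hFc.hasFDerivAt_convolution_left (μ := volume)
    ((ContinuousLinearMap.mul ℝ ℝ).precompR (ℝ × ℝ)) hF (hDb.locallyIntegrable) 0
  have h3 := second_derivative_symmetric h1 h2 (1, 0) (0, 1)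
  have h_int := (hFc.fderiv ℝ).convolutionExists_left (𝕜 := ℝ) (μ := volume)
    (F := (ℝ × ℝ) →L[ℝ] (ℝ × ℝ) →L[ℝ] ℝ)
    (((ContinuousLinearMap.mul ℝ ℝ).precompR (ℝ × ℝ)).precompL (ℝ × ℝ)) hDF
    hDb.locallyIntegrable 0
  have key : ∀ v w : ℝ × ℝ, convolution (𝕜 := ℝ)
      (F := (ℝ × ℝ) →L[ℝ] (ℝ × ℝ) →L[ℝ] ℝ) (fderiv ℝ F) (fderiv ℝ b)
      (((ContinuousLinearMap.mul ℝ ℝ).precompR (ℝ × ℝ)).precompL (ℝ × ℝ)) volume 0 v w =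
      - ∫ t, fderiv ℝ F t v * fderiv ℝ g t w := by
    intro v w
    have hfb : ∀ t, fderiv ℝ b (0 - t) = - fderiv ℝ g t := by
      intro t
      have : HasFDerivAt b ((fderiv ℝ g t).comp (-ContinuousLinearMap.id ℝ (ℝ × ℝ))) (0 - t) := by
        have hg' : HasFDerivAt g (fderiv ℝ g t) (-(0 - t)) := by
          simpa using ((hg.differentiable one_ne_zero) t).hasFDerivAt
        exact hg'.comp (0 - t) (hasFDerivAt_id (0 - t)).neg
      rw [this.fderiv]
      ext <;> simp
    rw [convolution_def, ContinuousLinearMap.integral_apply h_int.integrable,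
      ContinuousLinearMap.integral_apply (h_int.integrable.apply_continuousLinearMap v), ← integral_neg]
    congr 1
    ext t
    rw [hfb]
    simp [ContinuousLinearMap.precompR]
  rw [key, key, neg_inj] at h3
  have hI : ∀ v w : ℝ × ℝ, Integrable (fun t => fderiv ℝ F t v * fderiv ℝ g t w) := by
    intro v w
    apply Continuous.integrable_of_hasCompactSupport
    · exact (hDF.clm_apply continuous_const).mul (hDg.clm_apply continuous_const)
    · refine (hFc.fderiv ℝ).mono' ?_
      intro t ht
      apply subset_tsupport
      intro h0
      apply ht
      simp [h0]
  unfold pdx pdy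
  rw [integral_sub (hI _ _) (hI _ _), h3, sub_self]

/-! ### Energy of maps into the hemisphere -/

lemma contDiff_cutoff_mul {U : Set (ℝ × ℝ)} (hU : IsOpen U) {φ g : ℝ × ℝ → ℝ}
    (hφ : ContDiff ℝ 1 φ) (hs : tsupport φ ⊆ U) (hg : ContDiffOn ℝ 1 g U) :
    ContDiff ℝ 1 (fun z => φ z * g z) := by
  rw [contDiff_iff_contDiffAt]
  intro z
  by_cases hz : z ∈ tsupport φ
  · exact hφ.contDiffAt.mul (hg.contDiffAt (hU.mem_nhds (hs hz)))
  · have h0 : (fun z => φ z * g z) =ᶠ[𝓝 z] fun _ => 0 := by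
      filter_upwards [(isClosed_tsupport φ).isOpen_compl.mem_nhds hz] with w hw
      simp [image_eq_zero_of_notMem_tsupport hw]
    exact contDiffAt_const.congr_of_eventuallyEq h0

lemma exists_cutoff {E : Type*} [NormedAddCommGroup E] [NormedSpace ℝ E] [FiniteDimensional ℝ E]
    {K U : Set E} (hK : IsCompact K) (hU : IsOpen U) (hKU : K ⊆ U) :
    ∃ χ : E → ℝ, ContDiff ℝ 1 χ ∧ HasCompactSupport χ ∧ tsupport χ ⊆ U ∧
      (∀ z, χ z ∈ Icc (0 : ℝ) 1) ∧ ∀ z ∈ K, χ z = 1 := by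
  obtain ⟨K', hK', h1, h2⟩ := exists_compact_between hK hU hKU
  obtain ⟨f, hf, hr, hs, ht⟩ := exists_contMDiff_support_eq_eq_one_iff (n := 1)
    (modelWithCornersSelf ℝ E) (isOpen_interior (s := K')) hK.isClosed h1
  have hts : tsupport f ⊆ K' := by
    rw [tsupport, hs]
    exact closure_minimal interior_subset hK'.isClosed
  exact ⟨f, hf.contDiff, hK'.of_isClosed_subset (isClosed_tsupport f) hts, hts.trans h2,
    fun z => hr (mem_range_self z), fun z hz => (ht z).1 hz⟩

lemma pd_eq_zero {φ : ℝ × ℝ → ℝ} {z : ℝ × ℝ} (hz : z ∉ tsupport φ) :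
    φ z = 0 ∧ pdx φ z = 0 ∧ pdy φ z = 0 := by
  have h0 : φ =ᶠ[𝓝 z] fun _ => 0 := by
    filter_upwards [(isClosed_tsupport φ).isOpen_compl.mem_nhds hz] with w hw
    exact image_eq_zero_of_notMem_tsupport hw
  have := h0.fderiv_eq (𝕜 := ℝ)
  refine ⟨h0.self_of_nhds, ?_, ?_⟩ <;> simp [pdx, pdy, this]

/-- Localised version of `integral_jacobian_eq_zero`. -/
lemma integral_jacobian_eq_zero' {U : Set (ℝ × ℝ)} (hU : IsOpen U) {φ g : ℝ × ℝ → ℝ}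
    (hφ : ContDiff ℝ 1 φ) (hφc : HasCompactSupport φ) (hs : tsupport φ ⊆ U)
    (hg : ContDiffOn ℝ 1 g U) :
    ∫ z, (pdx φ z * pdy g z - pdy φ z * pdx g z) = 0 := by
  obtain ⟨K', hK', h1, h2⟩ := exists_compact_between hφc hU hs
  obtain ⟨χ, hχ, hχc, hχs, -, hχ1⟩ := exists_cutoff hK' hU h2
  have hχg := contDiff_cutoff_mul hU hχ hχs hg
  rw [← integral_jacobian_eq_zero hφ hχg hφc hχc.mul_right]
  congr 1
  ext z
  by_cases hz : z ∈ tsupport φ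
  · have : (fun z => χ z * g z) =ᶠ[𝓝 z] g := by
      filter_upwards [isOpen_interior.mem_nhds (h1 hz)] with w hw
      rw [hχ1 w (interior_subset hw), one_mul]
    have := this.fderiv_eq (𝕜 := ℝ)
    simp [pdx, pdy, this]
  · simp [pd_eq_zero hz]

lemma continuous_pdx {φ : ℝ × ℝ → ℝ} (hφ : ContDiff ℝ 1 φ) : Continuous (pdx φ) :=
  (hφ.continuous_fderiv one_ne_zero).clm_apply continuous_const

lemma continuous_pdy {φ : ℝ × ℝ → ℝ} (hφ : ContDiff ℝ 1 φ) : Continuous (pdy φ) :=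
  (hφ.continuous_fderiv one_ne_zero).clm_apply continuous_const

lemma continuousOn_pd {U : Set (ℝ × ℝ)} (hU : IsOpen U) {g : ℝ × ℝ → ℝ}
    (hg : ContDiffOn ℝ 1 g U) : ContinuousOn (pdx g) U ∧ ContinuousOn (pdy g) U :=
  ⟨(hg.continuousOn_fderiv_of_isOpen hU le_rfl).clm_apply continuousOn_const,
    (hg.continuousOn_fderiv_of_isOpen hU le_rfl).clm_apply continuousOn_const⟩

lemma continuous_of_tsupport {U : Set (ℝ × ℝ)} (hU : IsOpen U) {f : ℝ × ℝ → ℝ}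
    {K : Set (ℝ × ℝ)} (hK : IsClosed K) (hKU : K ⊆ U) (h0 : ∀ z ∉ K, f z = 0)
    (hf : ContinuousOn f U) : Continuous f := by
  rw [continuous_iff_continuousAt]
  intro z
  by_cases hz : z ∈ K
  · exact hf.continuousAt (hU.mem_nhds (hKU hz))
  · have : f =ᶠ[𝓝 z] fun _ => 0 := by
      filter_upwards [hK.isOpen_compl.mem_nhds hz] with w hw
      exact h0 w hw
    exact continuousAt_const.congr this.symm

lemma integrable_jacobian {U : Set (ℝ × ℝ)} (hU : IsOpen U) {φ g : ℝ × ℝ → ℝ}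
    (hφ : ContDiff ℝ 1 φ) (hφc : HasCompactSupport φ) (hs : tsupport φ ⊆ U)
    (hg : ContDiffOn ℝ 1 g U) :
    Integrable fun z => (pdx φ z * pdy g z - pdy φ z * pdx g z) := by
  have h0 : ∀ z ∉ tsupport φ, pdx φ z * pdy g z - pdy φ z * pdx g z = 0 := fun z hz => by
    simp [pd_eq_zero hz]
  refine Continuous.integrable_of_hasCompactSupport ?_ (HasCompactSupport.intro hφc h0)
  refine continuous_of_tsupport hU (isClosed_tsupport φ) hs h0 ?_
  exact ((continuous_pdx hφ).continuousOn.mul (continuousOn_pd hU hg).2).sub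
    ((continuous_pdy hφ).continuousOn.mul (continuousOn_pd hU hg).1)

/-- Squared length of the differential of a map `(n₁, n₂, n₃)` into `ℝ³`. -/
def energy (n₁ n₂ n₃ : ℝ × ℝ → ℝ) (z : ℝ × ℝ) : ℝ :=
  pdx n₁ z ^ 2 + pdy n₁ z ^ 2 + pdx n₂ z ^ 2 + pdy n₂ z ^ 2 + pdx n₃ z ^ 2 + pdy n₃ z ^ 2

set_option maxHeartbeats 1000000 in
/-- The pointwise inequality behind `energy_bound`: `x, y` are the partial derivatives of a map `n`
into the hemisphere and `(e, ex, ey)` the values of the cutoff and its partial derivatives. -/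
lemma energy_bound_pointwise {n₁ n₂ n₃ x₁ x₂ x₃ y₁ y₂ y₃ e ex ey C₁ C₂ : ℝ} (h3 : 0 < n₃)
    (hn : n₁ ^ 2 + n₂ ^ 2 + n₃ ^ 2 = 1) (cx : n₁ * x₁ + n₂ * x₂ + n₃ * x₃ = 0)
    (cy : n₁ * y₁ + n₂ * y₂ + n₃ * y₃ = 0)
    (he : x₁ ^ 2 + y₁ ^ 2 + x₂ ^ 2 + y₂ ^ 2 + x₃ ^ 2 + y₃ ^ 2 ≤
      C₁ - C₂ * ((x₁ * y₂ - y₁ * x₂) / n₃)) :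
    e ^ 2 * (x₁ ^ 2 + y₁ ^ 2 + x₂ ^ 2 + y₂ ^ 2 + x₃ ^ 2 + y₃ ^ 2) ≤
      2 * (C₁ * e ^ 2 + 4 * C₂ ^ 2 * (ex ^ 2 + ey ^ 2)) - 2 * C₂ *
      (((e ^ 2 * (n₁ * (-((1 + n₃) ^ 2)⁻¹ * x₃) + (1 + n₃)⁻¹ * x₁) + n₁ * (1 + n₃)⁻¹ * (2 * e * ex)) * y₂
        - (e ^ 2 * (n₁ * (-((1 + n₃) ^ 2)⁻¹ * y₃) + (1 + n₃)⁻¹ * y₁) + n₁ * (1 + n₃)⁻¹ * (2 * e * ey)) * x₂)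
      - ((e ^ 2 * (n₂ * (-((1 + n₃) ^ 2)⁻¹ * x₃) + (1 + n₃)⁻¹ * x₂) + n₂ * (1 + n₃)⁻¹ * (2 * e * ex)) * y₁
        - (e ^ 2 * (n₂ * (-((1 + n₃) ^ 2)⁻¹ * y₃) + (1 + n₃)⁻¹ * y₂) + n₂ * (1 + n₃)⁻¹ * (2 * e * ey)) * x₁)) := by
  set i := (1 + n₃)⁻¹ with hi
  have hi0 : 0 < i := by positivity
  have hi1 : (1 + n₃) * i = 1 := mul_inv_cancel₀ (by positivity)
  have hi2 : ((1 + n₃) ^ 2)⁻¹ = i ^ 2 := by rw [hi, inv_pow]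
  rw [hi2]
  set κ := (x₁ * y₂ - y₁ * x₂) / n₃ with hκ
  have hD : x₁ * y₂ - y₁ * x₂ = κ * n₃ := by rw [hκ]; field_simp
  have h32 : x₃ * y₂ - y₃ * x₂ = - n₁ * κ := by
    apply mul_left_cancel₀ h3.ne'
    linear_combination y₂ * cx - x₂ * cy - n₁ * hD
  have h31 : x₃ * y₁ - y₃ * x₁ = n₂ * κ := by
    apply mul_left_cancel₀ h3.ne'
    linear_combination y₁ * cx - x₁ * cy + n₂ * hD
  have hJ : (e ^ 2 * (n₁ * (-i ^ 2 * x₃) + i * x₁) + n₁ * i * (2 * e * ex)) * y₂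
        - (e ^ 2 * (n₁ * (-i ^ 2 * y₃) + i * y₁) + n₁ * i * (2 * e * ey)) * x₂
      - ((e ^ 2 * (n₂ * (-i ^ 2 * x₃) + i * x₂) + n₂ * i * (2 * e * ex)) * y₁
        - (e ^ 2 * (n₂ * (-i ^ 2 * y₃) + i * y₂) + n₂ * i * (2 * e * ey)) * x₁)
      = e ^ 2 * κ + 2 * e * (n₁ * i * (ex * y₂ - ey * x₂) - n₂ * i * (ex * y₁ - ey * x₁)) := by
    have e1 : 2 * i * (κ * n₃) + i ^ 2 * (n₁ ^ 2 + n₂ ^ 2) * κ = κ := by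
      have : n₁ ^ 2 + n₂ ^ 2 = (1 - n₃) * (1 + n₃) := by linarith
      rw [this]
      linear_combination (κ * i * (1 - n₃) + κ) * hi1
    linear_combination e ^ 2 * e1 + 2 * e ^ 2 * i * hD - e ^ 2 * i ^ 2 * n₁ * h32 + e ^ 2 * i ^ 2 * n₂ * h31
  rw [hJ]
  have hile : i ≤ 1 := by nlinarith
  have bnd : ∀ m : ℝ, m ^ 2 ≤ 1 → (m * i) ^ 2 ≤ 1 := fun m hm => by
    have : i ^ 2 ≤ 1 := by nlinarith
    calc (m * i) ^ 2 = m ^ 2 * i ^ 2 := by ring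
      _ ≤ 1 * 1 := by gcongr
      _ = 1 := by ring
  have ha : (n₁ * i) ^ 2 ≤ 1 := bnd _ (by nlinarith)
  have hb : (n₂ * i) ^ 2 ≤ 1 := bnd _ (by nlinarith)
  generalize n₁ * i = a at *
  generalize n₂ * i = b at *
  have young : ∀ a s t : ℝ, a ^ 2 ≤ 1 → 2 * C₂ * e * (a * (s * t)) ≤ e ^ 2 * t ^ 2 / 2 + 2 * C₂ ^ 2 * s ^ 2 := by
    intro a s t ha
    have : (a * s) ^ 2 ≤ s ^ 2 := by rw [mul_pow]; nlinarith [sq_nonneg s]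
    linarith [sq_nonneg (e * t - 2 * C₂ * (a * s)), mul_le_mul_of_nonneg_left this (sq_nonneg C₂)]
  have t1 := young a ex y₂ ha
  have t2 := young (-a) ey x₂ (by simpa using ha)
  have t3 := young (-b) ex y₁ (by simpa using hb)
  have t4 := young b ey x₁ hb
  have he' := mul_le_mul_of_nonneg_left he (sq_nonneg e)
  have t5 : 0 ≤ e ^ 2 * (x₃ ^ 2 + y₃ ^ 2) := by positivity
  linarith

/-- Energy bound for a map `n` into the open upper hemisphere whose energy density is controlled by
its Jacobian `{n₁, n₂} / n₃`: on the hemisphere the area form is the differential of the bounded form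
`(n₁ dn₂ - n₂ dn₁) / (1 + n₃)`, so the Jacobian can be integrated by parts. -/
lemma energy_bound {U : Set (ℝ × ℝ)} (hU : IsOpen U) {n₁ n₂ n₃ η : ℝ × ℝ → ℝ} {C₁ C₂ : ℝ}
    (h₁ : ContDiffOn ℝ 1 n₁ U) (h₂ : ContDiffOn ℝ 1 n₂ U) (h₃ : ContDiffOn ℝ 1 n₃ U)
    (hn : ∀ z ∈ U, n₁ z ^ 2 + n₂ z ^ 2 + n₃ z ^ 2 = 1) (hpos : ∀ z ∈ U, 0 < n₃ z)
    (he : ∀ z ∈ U, energy n₁ n₂ n₃ z ≤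
      C₁ - C₂ * ((pdx n₁ z * pdy n₂ z - pdy n₁ z * pdx n₂ z) / n₃ z))
    (hη : ContDiff ℝ 1 η) (hηc : HasCompactSupport η) (hηs : tsupport η ⊆ U) :
    ∫ z, η z ^ 2 * energy n₁ n₂ n₃ z ≤
      ∫ z, 2 * (C₁ * η z ^ 2 + 4 * C₂ ^ 2 * (pdx η z ^ 2 + pdy η z ^ 2)) := by
  set a : ℝ × ℝ → ℝ := fun z => n₁ z / (1 + n₃ z) with ha
  set b : ℝ × ℝ → ℝ := fun z => n₂ z / (1 + n₃ z) with hb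
  have hne : ∀ z ∈ U, 1 + n₃ z ≠ 0 := fun z hz => by have := hpos z hz; positivity
  have haC : ContDiffOn ℝ 1 a U := h₁.div (contDiffOn_const.add h₃) hne
  have hbC : ContDiffOn ℝ 1 b U := h₂.div (contDiffOn_const.add h₃) hne
  have hηsq : ContDiff ℝ 1 (fun z => η z ^ 2) := hη.pow 2
  have hηsqs : tsupport (fun z => η z ^ 2) ⊆ tsupport η := by
    apply closure_mono
    intro z hz h0
    exact hz (by simp [h0])
  have hηsqc : HasCompactSupport (fun z => η z ^ 2) :=
    hηc.of_isClosed_subset (isClosed_tsupport _) hηsqs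
  have hFC := contDiff_cutoff_mul hU hηsq (hηsqs.trans hηs) haC
  have hGC := contDiff_cutoff_mul hU hηsq (hηsqs.trans hηs) hbC
  have hsm : ∀ g : ℝ × ℝ → ℝ, tsupport (fun z => η z ^ 2 * g z) ⊆ tsupport η := fun g => by
    apply closure_mono
    intro z hz h0
    exact hz (by simp [h0])
  have hsc : ∀ g : ℝ × ℝ → ℝ, HasCompactSupport (fun z => η z ^ 2 * g z) := fun g =>
    hηc.of_isClosed_subset (isClosed_tsupport _) (hsm g)
  set F : ℝ × ℝ → ℝ := fun z => η z ^ 2 * a z with hF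
  set G : ℝ × ℝ → ℝ := fun z => η z ^ 2 * b z with hG
  have iF := integrable_jacobian hU hFC (hsc a) ((hsm a).trans hηs) h₂
  have iG := integrable_jacobian hU hGC (hsc b) ((hsm b).trans hηs) h₁
  have zF := integral_jacobian_eq_zero' hU hFC (hsc a) ((hsm a).trans hηs) h₂
  have zG := integral_jacobian_eq_zero' hU hGC (hsc b) ((hsm b).trans hηs) h₁
  set J : ℝ × ℝ → ℝ := fun z => (pdx F z * pdy n₂ z - pdy F z * pdx n₂ z) -
    (pdx G z * pdy n₁ z - pdy G z * pdx n₁ z) with hJ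
  have iJ : Integrable J := iF.sub iG
  have zJ : ∫ z, J z = 0 := by rw [hJ, integral_sub iF iG, zF, zG, sub_zero]
  set R : ℝ × ℝ → ℝ := fun z =>
    2 * (C₁ * η z ^ 2 + 4 * C₂ ^ 2 * (pdx η z ^ 2 + pdy η z ^ 2)) with hR
  have iR : Integrable R := by
    refine Continuous.integrable_of_hasCompactSupport ?_ (HasCompactSupport.intro hηc ?_)
    · have := hη.continuous
      have := continuous_pdx hη
      have := continuous_pdy hη
      fun_prop
    · intro z hz
      simp [hR, pd_eq_zero hz]
  have hpt : ∀ z, η z ^ 2 * energy n₁ n₂ n₃ z ≤ R z - 2 * C₂ * J z := by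
    intro z
    by_cases hz : z ∈ tsupport η
    · have hzU := hηs hz
      have hUz := hU.mem_nhds hzU
      have d₁ := (h₁.contDiffAt hUz).differentiableAt one_ne_zero |>.hasFDerivAt
      have d₂ := (h₂.contDiffAt hUz).differentiableAt one_ne_zero |>.hasFDerivAt
      have d₃ := (h₃.contDiffAt hUz).differentiableAt one_ne_zero |>.hasFDerivAt
      have dη : HasFDerivAt η (fderiv ℝ η z) z := ((hη.differentiable one_ne_zero) z).hasFDerivAt
      have p3 := hpos z hzU
      have hne' := hne z hzU
      have hunit := hn z hzU
      have dinv : HasFDerivAt (fun w => (1 + n₃ w)⁻¹) (-((1 + n₃ z) ^ 2)⁻¹ • fderiv ℝ n₃ z) z :=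
        by
        have hi := hasDerivAt_inv (𝕜 := ℝ) hne'
        exact HasDerivAt.comp_hasFDerivAt (f := fun w => 1 + n₃ w) z hi (d₃.const_add 1)
      have dF := (HasFDerivAt.pow (𝕜 := ℝ) dη 2).mul (d₁.mul dinv)
      replace dF : HasFDerivAt (𝕜 := ℝ) F _ z := dF
      have dG := (HasFDerivAt.pow (𝕜 := ℝ) dη 2).mul (d₂.mul dinv)
      replace dG : HasFDerivAt (𝕜 := ℝ) G _ z := dG
      have hconst : HasFDerivAt (fun w => n₁ w ^ 2 + n₂ w ^ 2 + n₃ w ^ 2)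
          (0 : ℝ × ℝ →L[ℝ] ℝ) z := by
        refine (hasFDerivAt_const (1 : ℝ) z).congr_of_eventuallyEq ?_
        filter_upwards [hUz] with w hw using hn w hw
      have huniq := hconst.unique (((HasFDerivAt.pow (𝕜 := ℝ) d₁ 2).add
        (HasFDerivAt.pow (𝕜 := ℝ) d₂ 2)).add (HasFDerivAt.pow (𝕜 := ℝ) d₃ 2))
      have cx := congrArg (fun L : ℝ × ℝ →L[ℝ] ℝ => L (1, 0)) huniq
      have cy := congrArg (fun L : ℝ × ℝ →L[ℝ] ℝ => L (0, 1)) huniq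
      have hez := he z hzU
      simp only [hR, hJ, energy]
      simp only [energy] at hez
      simp only [pdx, pdy, dF.fderiv, dG.fderiv] at hez ⊢
      simp at cx cy ⊢
      have := energy_bound_pointwise (e := η z) (ex := fderiv ℝ η z (1, 0))
        (ey := fderiv ℝ η z (0, 1)) p3 hunit (by linarith) (by linarith) hez
      refine this.trans (le_of_eq ?_)
      ring
    · have hFz := pd_eq_zero (fun h => hz (hsm a h))
      have hGz := pd_eq_zero (fun h => hz (hsm b h))
      simp only [hR, hJ, hF, hG, hFz, hGz, pd_eq_zero hz]
      simp
  calc ∫ z, η z ^ 2 * energy n₁ n₂ n₃ z ≤ ∫ z, (R z - 2 * C₂ * J z) := by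
        refine integral_mono_of_nonneg (Eventually.of_forall fun z => ?_)
          (iR.sub (iJ.const_mul _)) (Eventually.of_forall hpt)
        simp only [energy, Pi.zero_apply]
        positivity
    _ = ∫ z, R z := by
        rw [integral_sub iR (iJ.const_mul _), integral_const_mul (2 * C₂) J, zJ, mul_zero, sub_zero]

/-! ### Normalised solutions and the map `ψ` -/

/-- The linear form `α dx + β dy`. -/
def lin (α β : ℝ) : ℝ × ℝ →L[ℝ] ℝ :=
  α • ContinuousLinearMap.fst ℝ ℝ ℝ + β • ContinuousLinearMap.snd ℝ ℝ ℝ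

@[simp] lemma lin_apply (α β : ℝ) (h : ℝ × ℝ) : lin α β h = α * h.1 + β * h.2 := rfl

lemma eq_lin (T : ℝ × ℝ →L[ℝ] ℝ) : T = lin (T (1, 0)) (T (0, 1)) := by
  ext <;> simp

/-- A solution of the constant mean curvature equation on the sup-norm ball of radius `r` about the
origin, normalised by `u 0 = 0`, together with its partial derivatives `p = u_x`, `q = u_y`,
`a = u_xx`, `b = u_xy`, `c = u_yy`. -/
structure CMCDisk (H r : ℝ) where
  /-- the solution -/
  u : ℝ × ℝ → ℝ
  /-- `u_x` -/
  p : ℝ × ℝ → ℝ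
  /-- `u_y` -/
  q : ℝ × ℝ → ℝ
  /-- `u_xx` -/
  a : ℝ × ℝ → ℝ
  /-- `u_xy` -/
  b : ℝ × ℝ → ℝ
  /-- `u_yy` -/
  c : ℝ × ℝ → ℝ
  hu : ∀ z ∈ Metric.ball 0 r, HasFDerivAt u (lin (p z) (q z)) z
  hp : ∀ z ∈ Metric.ball 0 r, HasFDerivAt p (lin (a z) (b z)) z
  hq : ∀ z ∈ Metric.ball 0 r, HasFDerivAt q (lin (b z) (c z)) z
  ca : ContinuousOn a (Metric.ball 0 r)
  cb : ContinuousOn b (Metric.ball 0 r)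
  cc : ContinuousOn c (Metric.ball 0 r)
  eqn : ∀ z ∈ Metric.ball 0 r, (1 + q z ^ 2) * a z - 2 * p z * q z * b z + (1 + p z ^ 2) * c z =
    2 * H * √(1 + p z ^ 2 + q z ^ 2) ^ 3
  u0 : u 0 = 0

namespace CMCDisk
variable {H r : ℝ} (S : CMCDisk H r)

/-- The area element `√(1 + |∇u|²)`. -/
def W (z : ℝ × ℝ) : ℝ := √(1 + S.p z ^ 2 + S.q z ^ 2)

lemma W_sq (z : ℝ × ℝ) : S.W z ^ 2 = 1 + S.p z ^ 2 + S.q z ^ 2 := Real.sq_sqrt (by positivity)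

lemma one_le_W (z : ℝ × ℝ) : 1 ≤ S.W z := by
  rw [W, Real.one_le_sqrt]; nlinarith [sq_nonneg (S.p z), sq_nonneg (S.q z)]

lemma W_pos (z : ℝ × ℝ) : 0 < S.W z := one_pos.trans_le (S.one_le_W z)

lemma hasFDerivAt_inv_W {z : ℝ × ℝ} (hz : z ∈ Metric.ball 0 r) :
    HasFDerivAt (fun z => (S.W z)⁻¹)
      (lin (-(S.W z)⁻¹ ^ 3 * (S.p z * S.a z + S.q z * S.b z))
        (-(S.W z)⁻¹ ^ 3 * (S.p z * S.b z + S.q z * S.c z))) z := by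
  have h1 : HasFDerivAt (fun z => 1 + S.p z ^ 2 + S.q z ^ 2)
      (lin (2 * (S.p z * S.a z + S.q z * S.b z)) (2 * (S.p z * S.b z + S.q z * S.c z))) z := by
    have := (((HasFDerivAt.pow (𝕜 := ℝ) (S.hp z hz) 2).const_add 1).add
      (HasFDerivAt.pow (𝕜 := ℝ) (S.hq z hz) 2))
    refine this.congr_fderiv ?_
    ext <;> simp <;> ring
  have h2 := (h1.sqrt (by positivity))
  have h3 := HasDerivAt.comp_hasFDerivAt (f := S.W) z (hasDerivAt_inv (𝕜 := ℝ) (S.W_pos z).ne') h2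
  refine h3.congr_fderiv ?_
  have hW := (S.W_pos z).ne'
  change _ • (1 / (2 * S.W z)) • _ = _
  ext <;> simp <;> field_simp

end CMCDisk

lemma exists_primitive {r : ℝ} {f g f₁ f₂ g₂ : ℝ × ℝ → ℝ}
    (hf : ∀ z ∈ Metric.ball 0 r, HasFDerivAt f (lin (f₁ z) (f₂ z)) z)
    (hg : ∀ z ∈ Metric.ball 0 r, HasFDerivAt g (lin (f₂ z) (g₂ z)) z) :
    ∃ F : ℝ × ℝ → ℝ, F 0 = 0 ∧ ∀ z ∈ Metric.ball 0 r, HasFDerivAt F (lin (f z) (g z)) z := by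
  have hω : ∀ z ∈ Metric.ball (0 : ℝ × ℝ) r, HasFDerivAt (fun z => lin (f z) (g z))
      ((lin (f₁ z) (f₂ z)).smulRight (ContinuousLinearMap.fst ℝ ℝ ℝ) +
        (lin (f₂ z) (g₂ z)).smulRight (ContinuousLinearMap.snd ℝ ℝ ℝ)) z := fun z hz =>
    ((hf z hz).smul_const (ContinuousLinearMap.fst ℝ ℝ ℝ)).add
      ((hg z hz).smul_const (ContinuousLinearMap.snd ℝ ℝ ℝ))
  obtain ⟨F, hF⟩ := (convex_ball (0 : ℝ × ℝ) r).exists_forall_hasFDerivAt_of_fderiv_symmetric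
    Metric.isOpen_ball (fun z hz => (hω z hz).differentiableAt.differentiableWithinAt)
    (fun z hz x y => by rw [(hω z hz).fderiv]; simp; ring)
  exact ⟨fun z => F z - F 0, sub_self _, fun z hz => (hF z hz).sub_const _⟩

namespace CMCDisk
variable {H r : ℝ} (S : CMCDisk H r)

/-- First diagonal entry of the differential of the map `ψ`. -/
def m₁ (z : ℝ × ℝ) : ℝ := 1 + 2 * H * S.u z + (1 + S.p z ^ 2) * (S.W z)⁻¹
/-- Off-diagonal entry of the differential of `ψ`. -/
def m₂ (z : ℝ × ℝ) : ℝ := S.p z * S.q z * (S.W z)⁻¹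
/-- Second diagonal entry of the differential of `ψ`. -/
def m₃ (z : ℝ × ℝ) : ℝ := 1 + 2 * H * S.u z + (1 + S.q z ^ 2) * (S.W z)⁻¹

/-- The mean curvature equation makes the forms `m₁ dx + m₂ dy` and `m₂ dx + m₃ dy` closed;
their primitives are the components of `ψ`. -/
lemma exists_psi : ∃ ψ₁ ψ₂ : ℝ × ℝ → ℝ, ψ₁ 0 = 0 ∧ ψ₂ 0 = 0 ∧
    (∀ z ∈ Metric.ball 0 r, HasFDerivAt ψ₁ (lin (S.m₁ z) (S.m₂ z)) z) ∧
    ∀ z ∈ Metric.ball 0 r, HasFDerivAt ψ₂ (lin (S.m₂ z) (S.m₃ z)) z := by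
  have hw : ∀ z, (S.W z)⁻¹ ^ 2 * (1 + S.p z ^ 2 + S.q z ^ 2) = 1 := fun z => by
    rw [← S.W_sq, ← mul_pow, inv_mul_cancel₀ (S.W_pos z).ne', one_pow]
  have hw3 : ∀ z ∈ Metric.ball 0 r, ((1 + S.q z ^ 2) * S.a z - 2 * S.p z * S.q z * S.b z +
      (1 + S.p z ^ 2) * S.c z) * (S.W z)⁻¹ ^ 3 = 2 * H := fun z hz => by
    rw [S.eqn z hz, mul_assoc, ← W, ← mul_pow, mul_inv_cancel₀ (S.W_pos z).ne', one_pow, mul_one]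
  have d1 : ∀ z ∈ Metric.ball 0 r, HasFDerivAt S.m₁
      (lin (2 * H * S.p z + 2 * S.p z * S.a z * (S.W z)⁻¹ -
          (1 + S.p z ^ 2) * (S.W z)⁻¹ ^ 3 * (S.p z * S.a z + S.q z * S.b z))
        ((S.a z * S.q z + S.p z * S.b z) * (S.W z)⁻¹ -
          S.p z * S.q z * (S.W z)⁻¹ ^ 3 * (S.p z * S.a z + S.q z * S.b z))) z := by
    intro z hz
    have := (((S.hu z hz).const_mul (2 * H)).const_add 1).add
      (((HasFDerivAt.pow (𝕜 := ℝ) (S.hp z hz) 2).const_add 1).mul (S.hasFDerivAt_inv_W hz))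
    refine this.congr_fderiv ?_
    have e1 := hw z
    have e2 := hw3 z hz
    generalize (S.W z)⁻¹ = w at *
    ext
    · simp; ring
    · simp
      linear_combination (-S.q z) * e2 + (-S.p z * w * S.b z + S.a z * S.q z * w) * e1
  have d2 : ∀ z ∈ Metric.ball 0 r, HasFDerivAt S.m₂
      (lin ((S.a z * S.q z + S.p z * S.b z) * (S.W z)⁻¹ -
          S.p z * S.q z * (S.W z)⁻¹ ^ 3 * (S.p z * S.a z + S.q z * S.b z))
        ((S.b z * S.q z + S.p z * S.c z) * (S.W z)⁻¹ -
          S.p z * S.q z * (S.W z)⁻¹ ^ 3 * (S.p z * S.b z + S.q z * S.c z))) z := by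
    intro z hz
    have := ((S.hp z hz).mul (S.hq z hz)).mul (S.hasFDerivAt_inv_W hz)
    refine this.congr_fderiv ?_
    ext <;> simp <;> ring
  have d3 : ∀ z ∈ Metric.ball 0 r, HasFDerivAt S.m₃
      (lin ((S.b z * S.q z + S.p z * S.c z) * (S.W z)⁻¹ -
          S.p z * S.q z * (S.W z)⁻¹ ^ 3 * (S.p z * S.b z + S.q z * S.c z))
        (2 * H * S.q z + 2 * S.q z * S.c z * (S.W z)⁻¹ -
          (1 + S.q z ^ 2) * (S.W z)⁻¹ ^ 3 * (S.p z * S.b z + S.q z * S.c z))) z := by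
    intro z hz
    have := (((S.hu z hz).const_mul (2 * H)).const_add 1).add
      (((HasFDerivAt.pow (𝕜 := ℝ) (S.hq z hz) 2).const_add 1).mul (S.hasFDerivAt_inv_W hz))
    refine this.congr_fderiv ?_
    have e1 := hw z
    have e2 := hw3 z hz
    generalize (S.W z)⁻¹ = w at *
    ext
    · simp
      linear_combination (-S.p z) * e2 + (-S.q z * w * S.b z + S.c z * S.p z * w) * e1
    · simp; ring
  obtain ⟨ψ₁, h1, h1'⟩ := exists_primitive d1 d2
  obtain ⟨ψ₂, h2, h2'⟩ := exists_primitive d2 d3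
  exact ⟨ψ₁, ψ₂, h1, h2, h1', h2'⟩

end CMCDisk

/-! ### Lifting rays through `ψ` -/

/-- Flow of a vector field depending linearly on a parameter `k`, on the time interval `[0, 1]`.
The parameter is made part of the state and rescaled by `6`, so that the Picard-Lindelöf theorem
applies on the full time interval. -/
lemma exists_flow {X : (ℝ × ℝ) × (ℝ × ℝ) → ℝ × ℝ} (hX : ContDiff ℝ 1 X)
    (hb : ∀ z k, ‖X (z, k)‖ ≤ 3 * ‖k‖) (hl : ∀ z k (t : ℝ), X (z, t • k) = t • X (z, k))
    {ρ : ℝ} (hρ : 0 ≤ ρ) :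
    ∃ Γ : ℝ × ℝ → ℝ → ℝ × ℝ, (∀ k ∈ Metric.closedBall 0 ρ, Γ k 0 = 0 ∧
      ∀ t ∈ Icc (0 : ℝ) 1, HasDerivWithinAt (Γ k) (X (Γ k t, k)) (Icc 0 1) t) ∧
      ContinuousOn (fun k => Γ k 1) (Metric.closedBall 0 ρ) := by
  set F : (ℝ × ℝ) × (ℝ × ℝ) → (ℝ × ℝ) × (ℝ × ℝ) := fun x => ((1 / 6 : ℝ) • X x, 0) with hF
  have hFC : ContDiff ℝ 1 F := (hX.const_smul (1 / 6 : ℝ)).prodMk contDiff_const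
  let a : NNReal := ⟨12 * ρ, by positivity⟩
  let r : NNReal := ⟨6 * ρ, by positivity⟩
  obtain ⟨K, hK⟩ := hFC.contDiffOn.exists_lipschitzOnWith one_ne_zero
    (convex_closedBall (0 : (ℝ × ℝ) × (ℝ × ℝ)) a) (isCompact_closedBall _ _)
  have hPL : IsPicardLindelof (fun _ => F) (⟨0, by simp⟩ : Icc (0 : ℝ) 1) 0 a r r K := by
    refine IsPicardLindelof.of_time_independent ?_ hK ?_
    · intro x hx
      have hx2 : ‖x.2‖ ≤ 12 * ρ := (norm_snd_le x).trans (mem_closedBall_zero_iff.1 hx)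
      have := hb x.1 x.2
      simp only [hF, Prod.norm_mk, norm_smul, norm_zero]
      refine max_le ?_ r.2
      change _ ≤ 6 * ρ
      rw [Real.norm_of_nonneg (by norm_num)]
      linarith
    · change 6 * ρ * _ ≤ 12 * ρ - 6 * ρ
      simp
      linarith
  obtain ⟨α, hα, L', hL⟩ := hPL.exists_forall_mem_closedBall_eq_hasDerivWithinAt_lipschitzOnWith
  have hmem : ∀ k ∈ Metric.closedBall (0 : ℝ × ℝ) ρ,
      ((0 : ℝ × ℝ), (6 : ℝ) • k) ∈ Metric.closedBall (0 : (ℝ × ℝ) × (ℝ × ℝ)) r := by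
    intro k hk
    rw [mem_closedBall_zero_iff] at hk ⊢
    rw [Prod.norm_mk, norm_zero, norm_smul, Real.norm_of_nonneg (by norm_num)]
    exact max_le r.2 (mul_le_mul_of_nonneg_left hk (by norm_num))
  refine ⟨fun k t => (α (0, (6 : ℝ) • k) t).1, fun k hk => ?_, ?_⟩
  · obtain ⟨h0, h1⟩ := hα _ (hmem k hk)
    refine ⟨by simpa using congrArg Prod.fst h0, fun t ht => ?_⟩
    have hsnd : ∀ t ∈ Icc (0 : ℝ) 1, (α (0, (6 : ℝ) • k) t).2 = (6 : ℝ) • k := by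
      intro t ht
      have := norm_image_sub_le_of_norm_deriv_le_segment' (C := 0) (a := (0:ℝ)) (b := 1)
        (f := fun t => (α (0, (6 : ℝ) • k) t).2) (fun t ht =>
          (ContinuousLinearMap.snd ℝ (ℝ × ℝ) (ℝ × ℝ)).hasFDerivAt.comp_hasDerivWithinAt t (h1 t ht))
        (fun t ht => by simp [hF]) t ht
      rw [zero_mul, norm_le_zero_iff, sub_eq_zero] at this
      rw [this]
      exact congrArg Prod.snd h0
    have := (ContinuousLinearMap.fst ℝ (ℝ × ℝ) (ℝ × ℝ)).hasFDerivAt.comp_hasDerivWithinAt t (h1 t ht)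
    refine this.congr_deriv ?_
    have e : α (0, (6 : ℝ) • k) t = ((α (0, (6 : ℝ) • k) t).1, (6 : ℝ) • k) :=
      Prod.ext rfl (hsnd t ht)
    rw [e]
    simp only [hF, hl, smul_smul]
    norm_num
  · have h1 := (hL 1 (by simp)).continuousOn
    exact continuous_fst.comp_continuousOn
      (h1.comp (by fun_prop) (fun k hk => hmem k hk))

namespace CMCDisk
variable {H r : ℝ} (S : CMCDisk H r)

/-- Where `|2Hu| ≤ 1/2`, the differential of `ψ` dominates the metric of the graph. -/
lemma metric_le {z : ℝ × ℝ} (hz : |2 * H * S.u z| ≤ 1 / 2) (h₁ h₂ : ℝ) :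
    h₁ ^ 2 + h₂ ^ 2 + (S.p z * h₁ + S.q z * h₂) ^ 2 ≤
      4 * ((S.m₁ z * h₁ + S.m₂ z * h₂) ^ 2 + (S.m₂ z * h₁ + S.m₃ z * h₂) ^ 2) := by
  have hw := S.W_sq z
  have hw1 := S.one_le_W z
  have hw0 := S.W_pos z
  rw [abs_le] at hz
  set w := (S.W z)⁻¹ with hwd
  have hwp : 0 < w := by positivity
  have hw2 : w ^ 2 * (S.p z ^ 2 + S.q z ^ 2) = 1 - w ^ 2 := by
    have : w * S.W z = 1 := inv_mul_cancel₀ hw0.ne'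
    have h2 : w ^ 2 * S.W z ^ 2 = 1 := by rw [← mul_pow, this, one_pow]
    rw [hw] at h2
    linarith
  set β := 1 + 2 * H * S.u z + w with hβ
  have hβ1 : 1 / 2 + w ≤ β := by linarith [hz.1]
  set l := S.p z * h₁ + S.q z * h₂ with hl
  have e1 : S.m₁ z * h₁ + S.m₂ z * h₂ = β * h₁ + l * w * S.p z := by
    simp only [m₁, m₂, ← hwd, hβ, hl]; ring
  have e2 : S.m₂ z * h₁ + S.m₃ z * h₂ = β * h₂ + l * w * S.q z := by
    simp only [m₃, m₂, ← hwd, hβ, hl]; ring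
  have e3 : (S.m₁ z * h₁ + S.m₂ z * h₂) ^ 2 + (S.m₂ z * h₁ + S.m₃ z * h₂) ^ 2 =
      β ^ 2 * (h₁ ^ 2 + h₂ ^ 2) + 2 * (β * w) * l ^ 2 + l ^ 2 * (1 - w ^ 2) := by
    rw [e1, e2, ← hw2, hl]; ring
  rw [e3]
  have hβ2 : 1 / 4 ≤ β ^ 2 := by nlinarith
  have hβ3 : w ^ 2 ≤ β * w := by nlinarith
  have t1 : 0 ≤ (β ^ 2 - 1 / 4) * (h₁ ^ 2 + h₂ ^ 2) :=
    mul_nonneg (by linarith) (by positivity)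
  have t2 : 0 ≤ (β * w - w ^ 2) * l ^ 2 := mul_nonneg (by linarith) (by positivity)
  have t3 : 0 ≤ l ^ 2 * w ^ 2 := by positivity
  have t4 : 0 ≤ l ^ 2 := by positivity
  linarith

/-- The Jacobian determinant of `ψ`. -/
def D (z : ℝ × ℝ) : ℝ := S.m₁ z * S.m₃ z - S.m₂ z ^ 2

lemma D_eq (z : ℝ × ℝ) : S.D z = (1 + 2 * H * S.u z + (S.W z)⁻¹) *
    (1 + 2 * H * S.u z + S.W z) := by
  have hw := S.W_sq z
  have hw0 := S.W_pos z
  have hww : (S.W z)⁻¹ * S.W z = 1 := inv_mul_cancel₀ hw0.ne'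
  simp only [D, m₁, m₂, m₃]
  generalize (S.W z)⁻¹ = w at *
  have h1 : w * (1 + S.p z ^ 2 + S.q z ^ 2) = S.W z := by
    rw [← hw]; linear_combination S.W z * hww
  linear_combination (w + (1 + 2 * H * S.u z)) * h1

lemma D_pos {z : ℝ × ℝ} (hz : |2 * H * S.u z| ≤ 1 / 2) : 0 < S.D z := by
  have hw0 := S.W_pos z
  rw [abs_le] at hz
  rw [D_eq]
  have : 0 < (S.W z)⁻¹ := by positivity
  apply mul_pos <;> linarith [hz.1]

/-- The inverse of the differential of `ψ`, applied to a vector. -/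
def A (z k : ℝ × ℝ) : ℝ × ℝ :=
  ((S.m₃ z * k.1 - S.m₂ z * k.2) / S.D z, (S.m₁ z * k.2 - S.m₂ z * k.1) / S.D z)

lemma A_spec {z : ℝ × ℝ} (hz : |2 * H * S.u z| ≤ 1 / 2) (k : ℝ × ℝ) :
    S.m₁ z * (S.A z k).1 + S.m₂ z * (S.A z k).2 = k.1 ∧
    S.m₂ z * (S.A z k).1 + S.m₃ z * (S.A z k).2 = k.2 := by
  have := (S.D_pos hz).ne'
  simp only [A]
  constructor <;> field_simp <;> simp only [D] <;> ring

lemma norm_A_le {z : ℝ × ℝ} (hz : |2 * H * S.u z| ≤ 1 / 2) (k : ℝ × ℝ) :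
    ‖S.A z k‖ ≤ 3 * ‖k‖ ∧ |S.p z * (S.A z k).1 + S.q z * (S.A z k).2| ≤ 3 * ‖k‖ := by
  have h := S.metric_le hz (S.A z k).1 (S.A z k).2
  rw [(S.A_spec hz k).1, (S.A_spec hz k).2] at h
  have k1 : k.1 ^ 2 ≤ ‖k‖ ^ 2 := by
    rw [← sq_abs]; gcongr; exact norm_fst_le k
  have k2 : k.2 ^ 2 ≤ ‖k‖ ^ 2 := by
    rw [← sq_abs]; gcongr; exact norm_snd_le k
  have hk := norm_nonneg k
  have key : ∀ x : ℝ, x ^ 2 ≤ 9 * ‖k‖ ^ 2 → |x| ≤ 3 * ‖k‖ := fun x hx =>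
    abs_le_of_sq_le_sq (by linarith) (by positivity)
  refine ⟨?_, key _ ?_⟩
  · rw [Prod.norm_def]
    exact max_le (key _ (by nlinarith [sq_nonneg (S.A z k).2])) (key _ (by nlinarith [sq_nonneg (S.A z k).1]))
  · nlinarith [sq_nonneg (S.A z k).2, sq_nonneg (S.A z k).1]

end CMCDisk

lemma contDiffOn_one_of_hasFDerivAt {U : Set (ℝ × ℝ)} (hU : IsOpen U) {f f₁ f₂ : ℝ × ℝ → ℝ}
    (hf : ∀ z ∈ U, HasFDerivAt f (lin (f₁ z) (f₂ z)) z)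
    (h₁ : ContinuousOn f₁ U) (h₂ : ContinuousOn f₂ U) : ContDiffOn ℝ 1 f U := by
  rw [show (1 : WithTop ℕ∞) = 0 + 1 from (zero_add 1).symm,
    contDiffOn_succ_iff_fderiv_of_isOpen hU]
  refine ⟨fun z hz => (hf z hz).differentiableAt.differentiableWithinAt, by simp, ?_⟩
  rw [contDiffOn_zero]
  have : ContinuousOn (fun z => lin (f₁ z) (f₂ z)) U :=
    (h₁.smul continuousOn_const).add (h₂.smul continuousOn_const)
  exact this.congr fun z hz => (hf z hz).fderiv

namespace CMCDisk
variable {H r : ℝ} (S : CMCDisk H r)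

lemma contDiffOn_p : ContDiffOn ℝ 1 S.p (Metric.ball 0 r) :=
  contDiffOn_one_of_hasFDerivAt Metric.isOpen_ball S.hp S.ca S.cb

lemma contDiffOn_q : ContDiffOn ℝ 1 S.q (Metric.ball 0 r) :=
  contDiffOn_one_of_hasFDerivAt Metric.isOpen_ball S.hq S.cb S.cc

lemma contDiffOn_u : ContDiffOn ℝ 1 S.u (Metric.ball 0 r) :=
  contDiffOn_one_of_hasFDerivAt Metric.isOpen_ball S.hu S.contDiffOn_p.continuousOn
    S.contDiffOn_q.continuousOn

lemma contDiffOn_W : ContDiffOn ℝ 1 S.W (Metric.ball 0 r) :=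
  ((contDiffOn_const.add (S.contDiffOn_p.pow 2)).add (S.contDiffOn_q.pow 2)).sqrt
    (fun z _ => by positivity)

lemma contDiffOn_inv_W : ContDiffOn ℝ 1 (fun z => (S.W z)⁻¹) (Metric.ball 0 r) :=
  S.contDiffOn_W.inv (fun z _ => (S.W_pos z).ne')

lemma contDiffOn_m₁ : ContDiffOn ℝ 1 S.m₁ (Metric.ball 0 r) :=
  (contDiffOn_const.add (contDiffOn_const.mul S.contDiffOn_u)).add
    ((contDiffOn_const.add (S.contDiffOn_p.pow 2)).mul S.contDiffOn_inv_W)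

lemma contDiffOn_m₂ : ContDiffOn ℝ 1 S.m₂ (Metric.ball 0 r) :=
  (S.contDiffOn_p.mul S.contDiffOn_q).mul S.contDiffOn_inv_W

lemma contDiffOn_m₃ : ContDiffOn ℝ 1 S.m₃ (Metric.ball 0 r) :=
  (contDiffOn_const.add (contDiffOn_const.mul S.contDiffOn_u)).add
    ((contDiffOn_const.add (S.contDiffOn_q.pow 2)).mul S.contDiffOn_inv_W)

lemma contDiffOn_D : ContDiffOn ℝ 1 S.D (Metric.ball 0 r) :=
  (S.contDiffOn_m₁.mul S.contDiffOn_m₃).sub (S.contDiffOn_m₂.pow 2)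

/-- A section `s` of `ψ` over a ball of radius depending only on `H` and `r`, obtained by lifting
rays: `t ↦ s (t k)` solves `γ' = (Dψ)⁻¹ k`.  The lifts cannot leave the region where `ψ` is a local
diffeomorphism, because `metric_le` bounds both the horizontal and vertical speed of `γ`. -/
lemma exists_section (hH : 0 < H) {ρ : ℝ} (hρ : 0 < ρ) (hρr : 3 * ρ < r)
    (hρH : 3 * ρ * (4 * H) < 1) {ψ₁ ψ₂ : ℝ × ℝ → ℝ} (h01 : ψ₁ 0 = 0) (h02 : ψ₂ 0 = 0)
    (hψ₁ : ∀ z ∈ Metric.ball 0 r, HasFDerivAt ψ₁ (lin (S.m₁ z) (S.m₂ z)) z)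
    (hψ₂ : ∀ z ∈ Metric.ball 0 r, HasFDerivAt ψ₂ (lin (S.m₂ z) (S.m₃ z)) z) :
    ∃ s : ℝ × ℝ → ℝ × ℝ, ContinuousOn s (Metric.closedBall 0 ρ) ∧
      ∀ k ∈ Metric.closedBall 0 ρ, ‖s k‖ ≤ 3 * ‖k‖ ∧ |S.u (s k)| ≤ 3 * ‖k‖ ∧
        ψ₁ (s k) = k.1 ∧ ψ₂ (s k) = k.2 := by
  have hr : Metric.closedBall (0 : ℝ × ℝ) (3 * ρ) ⊆ Metric.ball 0 r :=
    Metric.closedBall_subset_ball hρr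
  have huc := S.contDiffOn_u.continuousOn
  set O : Set (ℝ × ℝ) := Metric.ball 0 r ∩ S.u ⁻¹' {x | |x| * (4 * H) < 1} with hO
  have hOo : IsOpen O := huc.isOpen_inter_preimage Metric.isOpen_ball
    (isOpen_lt (by fun_prop) continuous_const)
  have hOu : ∀ z ∈ O, |2 * H * S.u z| ≤ 1 / 2 := by
    intro z hz
    have : |S.u z| * (4 * H) < 1 := hz.2
    rw [abs_mul, abs_of_pos (by positivity)]
    linarith
  set K : Set (ℝ × ℝ) := Metric.closedBall 0 (3 * ρ) ∩ S.u ⁻¹' {x | |x| ≤ 3 * ρ} with hK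
  have hKc : IsCompact K := (isCompact_closedBall _ _).of_isClosed_subset
    ((huc.mono hr).preimage_isClosed_of_isClosed Metric.isClosed_closedBall
      (isClosed_le (by fun_prop) continuous_const)) inter_subset_left
  have hKO : K ⊆ O := fun z hz => ⟨hr hz.1, by
    have : |S.u z| ≤ 3 * ρ := hz.2
    change |S.u z| * (4 * H) < 1
    nlinarith⟩
  obtain ⟨χ, hχ, hχc, hχs, hχ01, hχ1⟩ := exists_cutoff hKc hOo hKO
  have hOb : O ⊆ Metric.ball 0 r := inter_subset_left
  have hDne : ∀ z ∈ O, S.D z ≠ 0 := fun z hz => (S.D_pos (hOu z hz)).ne'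
  have c1 := contDiff_cutoff_mul hOo hχ hχs
    ((S.contDiffOn_m₁.mono hOb).div (S.contDiffOn_D.mono hOb) hDne)
  have c2 := contDiff_cutoff_mul hOo hχ hχs
    ((S.contDiffOn_m₂.mono hOb).div (S.contDiffOn_D.mono hOb) hDne)
  have c3 := contDiff_cutoff_mul hOo hχ hχs
    ((S.contDiffOn_m₃.mono hOb).div (S.contDiffOn_D.mono hOb) hDne)
  set X : (ℝ × ℝ) × (ℝ × ℝ) → ℝ × ℝ := fun x =>
    (χ x.1 * (S.m₃ x.1 / S.D x.1) * x.2.1 - χ x.1 * (S.m₂ x.1 / S.D x.1) * x.2.2,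
      χ x.1 * (S.m₁ x.1 / S.D x.1) * x.2.2 - χ x.1 * (S.m₂ x.1 / S.D x.1) * x.2.1) with hX
  have hXC : ContDiff ℝ 1 X := by
    have d1 := c1.comp (contDiff_fst (𝕜 := ℝ) (E := ℝ × ℝ) (F := ℝ × ℝ))
    have d2 := c2.comp (contDiff_fst (𝕜 := ℝ) (E := ℝ × ℝ) (F := ℝ × ℝ))
    have d3 := c3.comp (contDiff_fst (𝕜 := ℝ) (E := ℝ × ℝ) (F := ℝ × ℝ))
    have k1 : ContDiff ℝ 1 (fun x : (ℝ × ℝ) × (ℝ × ℝ) => x.2.1) := by fun_prop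
    have k2 : ContDiff ℝ 1 (fun x : (ℝ × ℝ) × (ℝ × ℝ) => x.2.2) := by fun_prop
    exact ((d3.mul k1).sub (d2.mul k2)).prodMk ((d1.mul k2).sub (d2.mul k1))
  have hXA : ∀ z k, X (z, k) = χ z • S.A z k := by
    intro z k
    ext <;> simp [hX, A] <;> ring
  have hX0 : ∀ z ∉ O, ∀ k, X (z, k) = 0 := by
    intro z hz k
    rw [hXA, image_eq_zero_of_notMem_tsupport (fun h => hz (hχs h)), zero_smul]
  have hXb : ∀ z k, ‖X (z, k)‖ ≤ 3 * ‖k‖ ∧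
      |S.p z * (X (z, k)).1 + S.q z * (X (z, k)).2| ≤ 3 * ‖k‖ := by
    intro z k
    by_cases hz : z ∈ O
    · obtain ⟨b1, b2⟩ := S.norm_A_le (hOu z hz) k
      have b3 := hχ01 z
      have : S.p z * (X (z, k)).1 + S.q z * (X (z, k)).2 =
          χ z * (S.p z * (S.A z k).1 + S.q z * (S.A z k).2) := by
        rw [hXA]; simp; ring
      rw [this, hXA, norm_smul, abs_mul, Real.norm_of_nonneg b3.1, abs_of_nonneg b3.1]
      exact ⟨(mul_le_of_le_one_left (norm_nonneg _) b3.2).trans b1,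
        (mul_le_of_le_one_left (abs_nonneg _) b3.2).trans b2⟩
    · rw [hX0 z hz]; simp
  obtain ⟨Γ, hΓ, hΓc⟩ := exists_flow hXC (fun z k => (hXb z k).1)
    (fun z k t => by ext <;> simp [hX] <;> ring) hρ.le
  refine ⟨fun k => Γ k 1, hΓc, fun k hk => ?_⟩
  obtain ⟨h0, hd⟩ := hΓ k hk
  rw [mem_closedBall_zero_iff] at hk
  have b1 : ∀ t ∈ Icc (0 : ℝ) 1, ‖Γ k t‖ ≤ 3 * ‖k‖ := by
    intro t ht
    have := norm_image_sub_le_of_norm_deriv_le_segment' hd (fun t _ => (hXb _ k).1) t ht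
    rw [h0, sub_zero, sub_zero] at this
    exact this.trans (mul_le_of_le_one_right (by positivity) ht.2)
  have hball : ∀ t ∈ Icc (0 : ℝ) 1, Γ k t ∈ Metric.closedBall (0 : ℝ × ℝ) (3 * ρ) := fun t ht => by
    rw [mem_closedBall_zero_iff]; linarith [b1 t ht]
  have b2 : ∀ t ∈ Icc (0 : ℝ) 1, |S.u (Γ k t)| ≤ 3 * ‖k‖ := by
    intro t ht
    have := norm_image_sub_le_of_norm_deriv_le_segment' (f := fun t => S.u (Γ k t))
      (fun t ht => (S.hu _ (hr (hball t ht))).comp_hasDerivWithinAt t (hd t ht))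
      (fun t _ => (hXb _ k).2) t ht
    rw [h0, S.u0, sub_zero, sub_zero] at this
    exact this.trans (mul_le_of_le_one_right (by positivity) ht.2)
  have hK' : ∀ t ∈ Icc (0 : ℝ) 1, Γ k t ∈ K := fun t ht =>
    ⟨hball t ht, (b2 t ht).trans (by linarith)⟩
  have hXK : ∀ t ∈ Icc (0 : ℝ) 1, X (Γ k t, k) = S.A (Γ k t) k := fun t ht => by
    rw [hXA, hχ1 _ (hK' t ht), one_smul]
  have one_mem : (1 : ℝ) ∈ Icc (0 : ℝ) 1 := by simp
  have lift : ∀ (ψ : ℝ × ℝ → ℝ) (α β : ℝ × ℝ → ℝ) (κ : ℝ), ψ 0 = 0 →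
      (∀ z ∈ Metric.ball 0 r, HasFDerivAt ψ (lin (α z) (β z)) z) →
      (∀ z ∈ K, α z * (S.A z k).1 + β z * (S.A z k).2 = κ) → ψ (Γ k 1) = κ := by
    intro ψ α β κ hψ0 hψ hκ
    have := norm_image_sub_le_of_norm_deriv_le_segment' (C := 0) (a := (0:ℝ)) (b := 1)
      (f := fun t => ψ (Γ k t) - t * κ) (f' := fun _ => 0) (fun t ht => by
        have h1 := (hψ _ (hr (hball t ht))).comp_hasDerivWithinAt t (hd t ht)
        rw [hXK t ht, lin_apply, hκ _ (hK' t ht)] at h1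
        have h2 := h1.sub ((hasDerivWithinAt_id t (Icc (0 : ℝ) 1)).mul_const κ)
        rw [one_mul, sub_self] at h2
        exact h2)
      (fun t _ => by simp) 1 one_mem
    simpa [h0, hψ0, sub_eq_zero] using this
  exact ⟨b1 1 one_mem, b2 1 one_mem,
    lift ψ₁ _ _ _ h01 hψ₁ (fun z hz => (S.A_spec (hOu z (hKO hz)) k).1),
    lift ψ₂ _ _ _ h02 hψ₂ (fun z hz => (S.A_spec (hOu z (hKO hz)) k).2)⟩

end CMCDisk

/-! ### The parametrisation by `ψ` -/

/-- The map `ψ = (ψ₁, ψ₂)` attached to a solution, together with a section `s` over a ball. -/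
structure Chart {H r : ℝ} (S : CMCDisk H r) (ρ : ℝ) where
  /-- first component of `ψ` -/
  ψ₁ : ℝ × ℝ → ℝ
  /-- second component of `ψ` -/
  ψ₂ : ℝ × ℝ → ℝ
  /-- the section of `ψ` -/
  s : ℝ × ℝ → ℝ × ℝ
  hψ₁ : ∀ z ∈ Metric.ball 0 r, HasFDerivAt ψ₁ (lin (S.m₁ z) (S.m₂ z)) z
  hψ₂ : ∀ z ∈ Metric.ball 0 r, HasFDerivAt ψ₂ (lin (S.m₂ z) (S.m₃ z)) z
  ψ0 : ψ₁ 0 = 0 ∧ ψ₂ 0 = 0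
  s0 : s 0 = 0
  cont : ContinuousOn s (Metric.ball 0 ρ)
  mem : ∀ k ∈ Metric.ball 0 ρ, s k ∈ Metric.ball 0 r
  small : ∀ k ∈ Metric.ball 0 ρ, |2 * H * S.u (s k)| ≤ 1 / 2
  lift : ∀ k ∈ Metric.ball 0 ρ, (ψ₁ (s k), ψ₂ (s k)) = k

lemma exists_chart {H r : ℝ} (S : CMCDisk H r) (hH : 0 < H) {ρ : ℝ} (hρ : 0 < ρ)
    (hρr : 3 * ρ < r) (hρH : 3 * ρ * (4 * H) < 1) : Nonempty (Chart S ρ) := by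
  obtain ⟨ψ₁, ψ₂, h01, h02, hψ₁, hψ₂⟩ := S.exists_psi
  obtain ⟨s, hs, hs'⟩ := S.exists_section hH hρ hρr hρH h01 h02 hψ₁ hψ₂
  have hsub := Metric.ball_subset_closedBall (x := (0 : ℝ × ℝ)) (ε := ρ)
  refine ⟨⟨ψ₁, ψ₂, s, hψ₁, hψ₂, ⟨h01, h02⟩, ?_, hs.mono hsub, fun k hk => ?_, fun k hk => ?_,
    fun k hk => ?_⟩⟩
  · have := (hs' 0 (by simp [hρ.le])).1
    simpa using this
  · have := (hs' k (hsub hk)).1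
    rw [mem_ball_zero_iff] at hk ⊢
    linarith
  · have := (hs' k (hsub hk)).2.1
    rw [mem_ball_zero_iff] at hk
    rw [abs_mul, abs_of_pos (by positivity)]
    nlinarith
  · exact Prod.ext (hs' k (hsub hk)).2.2.1 (hs' k (hsub hk)).2.2.2

namespace Chart
variable {H r ρ : ℝ} {S : CMCDisk H r} (C : Chart S ρ)

/-- The map `ψ`. -/
def ψ (z : ℝ × ℝ) : ℝ × ℝ := (C.ψ₁ z, C.ψ₂ z)

/-- The differential of `ψ` as an invertible linear map. -/
def equiv {z : ℝ × ℝ} (hz : |2 * H * S.u z| ≤ 1 / 2) : (ℝ × ℝ) ≃L[ℝ] (ℝ × ℝ) :=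
  ContinuousLinearEquiv.equivOfInverse
    ((lin (S.m₁ z) (S.m₂ z)).prod (lin (S.m₂ z) (S.m₃ z)))
    ((lin (S.m₃ z / S.D z) (-S.m₂ z / S.D z)).prod (lin (-S.m₂ z / S.D z) (S.m₁ z / S.D z)))
    (fun h => by
      have := (S.D_pos hz).ne'
      ext <;> simp <;> field_simp <;> simp only [CMCDisk.D] <;> ring)
    (fun h => by
      have := (S.D_pos hz).ne'
      ext <;> simp <;> field_simp <;> simp only [CMCDisk.D] <;> ring)

lemma hasStrictFDerivAt_ψ {z : ℝ × ℝ} (hz : z ∈ Metric.ball 0 r) (hz' : |2 * H * S.u z| ≤ 1 / 2) :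
    HasStrictFDerivAt C.ψ (equiv hz' : (ℝ × ℝ) →L[ℝ] (ℝ × ℝ)) z := by
  have c₁ : ContDiffOn ℝ 1 C.ψ₁ (Metric.ball 0 r) := contDiffOn_one_of_hasFDerivAt
    Metric.isOpen_ball C.hψ₁ S.contDiffOn_m₁.continuousOn S.contDiffOn_m₂.continuousOn
  have c₂ : ContDiffOn ℝ 1 C.ψ₂ (Metric.ball 0 r) := contDiffOn_one_of_hasFDerivAt
    Metric.isOpen_ball C.hψ₂ S.contDiffOn_m₂.continuousOn S.contDiffOn_m₃.continuousOn
  have hU := Metric.isOpen_ball.mem_nhds hz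
  have := ((c₁.contDiffAt hU).prodMk (c₂.contDiffAt hU)).hasStrictFDerivAt' (n := 1)
    ((C.hψ₁ z hz).prodMk (C.hψ₂ z hz)) one_ne_zero
  exact this

lemma continuousAt_s {k : ℝ × ℝ} (hk : k ∈ Metric.ball 0 ρ) : ContinuousAt C.s k :=
  C.cont.continuousAt (Metric.isOpen_ball.mem_nhds hk)

lemma ψ_s {k : ℝ × ℝ} (hk : k ∈ Metric.ball 0 ρ) : C.ψ (C.s k) = k := C.lift k hk

/-- Near the image of the section, the section is a two-sided inverse of `ψ`. -/
lemma eventually_s_ψ {k : ℝ × ℝ} (hk : k ∈ Metric.ball 0 ρ) :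
    ∀ᶠ z in 𝓝 (C.s k), C.ψ z ∈ Metric.ball 0 ρ ∧ C.s (C.ψ z) = z := by
  have hst := C.hasStrictFDerivAt_ψ (C.mem k hk) (C.small k hk)
  have h1 := hst.eventually_left_inverse
  have hψc : Tendsto C.ψ (𝓝 (C.s k)) (𝓝 k) := by
    have := hst.continuousAt.tendsto
    rwa [C.ψ_s hk] at this
  have h2 := hψc.eventually (Metric.isOpen_ball.mem_nhds hk)
  have h3 := ((C.continuousAt_s hk).tendsto.comp hψc).eventually h1
  filter_upwards [h1, h2, h3] with z z1 z2 z3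
  refine ⟨z2, ?_⟩
  simp only [Function.comp] at z3
  rw [C.ψ_s z2] at z3
  rw [← z3, z1]

lemma hasFDerivAt_s {k : ℝ × ℝ} (hk : k ∈ Metric.ball 0 ρ) :
    HasFDerivAt C.s ((equiv (C.small k hk)).symm : (ℝ × ℝ) →L[ℝ] (ℝ × ℝ)) k :=
  HasFDerivAt.of_local_left_inverse (C.continuousAt_s hk)
    (C.hasStrictFDerivAt_ψ (C.mem k hk) (C.small k hk)).hasFDerivAt
    (by filter_upwards [Metric.isOpen_ball.mem_nhds hk] with y hy using C.ψ_s hy)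

lemma contDiffOn_s : ContDiffOn ℝ 1 C.s (Metric.ball 0 ρ) := by
  have hm : MapsTo C.s (Metric.ball 0 ρ) (Metric.ball 0 r) := C.mem
  have c₁ := S.contDiffOn_m₁.continuousOn.comp C.cont hm
  have c₂ := S.contDiffOn_m₂.continuousOn.comp C.cont hm
  have c₃ := S.contDiffOn_m₃.continuousOn.comp C.cont hm
  have cD := S.contDiffOn_D.continuousOn.comp C.cont hm
  have hD : ∀ k ∈ Metric.ball 0 ρ, S.D (C.s k) ≠ 0 := fun k hk => (S.D_pos (C.small k hk)).ne'
  have h1 : ContDiffOn ℝ 1 (fun k => (C.s k).1) (Metric.ball 0 ρ) :=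
    contDiffOn_one_of_hasFDerivAt (f₁ := fun k => S.m₃ (C.s k) / S.D (C.s k))
      (f₂ := fun k => -S.m₂ (C.s k) / S.D (C.s k)) Metric.isOpen_ball
      (fun k hk => (C.hasFDerivAt_s hk).fst) (c₃.div cD hD) (c₂.neg.div cD hD)
  have h2 : ContDiffOn ℝ 1 (fun k => (C.s k).2) (Metric.ball 0 ρ) :=
    contDiffOn_one_of_hasFDerivAt (f₁ := fun k => -S.m₂ (C.s k) / S.D (C.s k))
      (f₂ := fun k => S.m₁ (C.s k) / S.D (C.s k)) Metric.isOpen_ball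
      (fun k hk => (C.hasFDerivAt_s hk).snd) (c₂.neg.div cD hD) (c₁.div cD hD)
  exact h1.prodMk h2

/-- Partial derivatives of a function pulled back by the section. -/
lemma pd_comp {f : ℝ × ℝ → ℝ} {f₁ f₂ : ℝ} {k : ℝ × ℝ} (hk : k ∈ Metric.ball 0 ρ)
    (hf : HasFDerivAt f (lin f₁ f₂) (C.s k)) :
    pdx (fun k => f (C.s k)) k = f₁ * (S.A (C.s k) (1, 0)).1 + f₂ * (S.A (C.s k) (1, 0)).2 ∧
    pdy (fun k => f (C.s k)) k = f₁ * (S.A (C.s k) (0, 1)).1 + f₂ * (S.A (C.s k) (0, 1)).2 := by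
  have h : HasFDerivAt (fun k => f (C.s k)) _ k := hf.comp k (C.hasFDerivAt_s hk)
  have e : ∀ v, (equiv (C.small k hk)).symm v =
    (S.m₃ (C.s k) / S.D (C.s k) * v.1 + -S.m₂ (C.s k) / S.D (C.s k) * v.2,
      -S.m₂ (C.s k) / S.D (C.s k) * v.1 + S.m₁ (C.s k) / S.D (C.s k) * v.2) := fun v => rfl
  simp only [pdx, pdy, h.fderiv]
  simp [e, CMCDisk.A]

end Chart

lemma quad_nonneg (p q P Q : ℝ) :
    0 ≤ (1 + q ^ 2) * P ^ 2 - 2 * p * q * P * Q + (1 + p ^ 2) * Q ^ 2 := by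
  have : (1 + q ^ 2) * P ^ 2 - 2 * p * q * P * Q + (1 + p ^ 2) * Q ^ 2 =
      P ^ 2 + Q ^ 2 + (q * P - p * Q) ^ 2 := by ring
  rw [this]
  positivity

/-- Algebraic form of `|DN h|² ≤ (4H² - 2K) |h|²`: the difference of the two sides is `|DN h*|²`
for the rotated vector `h*`. -/
lemma normal_energy_le (p q a b c h₁ h₂ : ℝ) :
    ((1 + q ^ 2) * (a * h₁ + b * h₂) ^ 2 - 2 * p * q * (a * h₁ + b * h₂) * (b * h₁ + c * h₂) +
      (1 + p ^ 2) * (b * h₁ + c * h₂) ^ 2) * (1 + p ^ 2 + q ^ 2) ≤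
    (((1 + q ^ 2) * a - 2 * p * q * b + (1 + p ^ 2) * c) ^ 2 -
      2 * (1 + p ^ 2 + q ^ 2) * (a * c - b ^ 2)) * (h₁ ^ 2 + h₂ ^ 2 + (p * h₁ + q * h₂) ^ 2) := by
  have := quad_nonneg p q (a * (-(p * q * h₁ + (1 + q ^ 2) * h₂)) + b * ((1 + p ^ 2) * h₁ + p * q * h₂))
    (b * (-(p * q * h₁ + (1 + q ^ 2) * h₂)) + c * ((1 + p ^ 2) * h₁ + p * q * h₂))
  rw [← sub_nonneg]
  refine this.trans (le_of_eq ?_)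
  ring

/-! ### Energy density of the Gauss map -/

namespace CMCDisk
variable {H r : ℝ} (S : CMCDisk H r)

/-- First component of the unit normal. -/
def n₁ (z : ℝ × ℝ) : ℝ := -S.p z * (S.W z)⁻¹
/-- Second component of the unit normal. -/
def n₂ (z : ℝ × ℝ) : ℝ := -S.q z * (S.W z)⁻¹
/-- Third component of the unit normal. -/
def n₃ (z : ℝ × ℝ) : ℝ := (S.W z)⁻¹

lemma inv_W_sq (z : ℝ × ℝ) : (S.W z)⁻¹ ^ 2 * (1 + S.p z ^ 2 + S.q z ^ 2) = 1 := by
  rw [← S.W_sq, ← mul_pow, inv_mul_cancel₀ (S.W_pos z).ne', one_pow]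

lemma n₃_pos (z : ℝ × ℝ) : 0 < S.n₃ z := inv_pos.2 (S.W_pos z)

lemma n_unit (z : ℝ × ℝ) : S.n₁ z ^ 2 + S.n₂ z ^ 2 + S.n₃ z ^ 2 = 1 := by
  have := S.inv_W_sq z
  simp only [n₁, n₂, n₃]
  linear_combination this

lemma contDiffOn_n₁ : ContDiffOn ℝ 1 S.n₁ (Metric.ball 0 r) :=
  S.contDiffOn_p.neg.mul S.contDiffOn_inv_W

lemma contDiffOn_n₂ : ContDiffOn ℝ 1 S.n₂ (Metric.ball 0 r) :=
  S.contDiffOn_q.neg.mul S.contDiffOn_inv_W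

lemma contDiffOn_n₃ : ContDiffOn ℝ 1 S.n₃ (Metric.ball 0 r) := S.contDiffOn_inv_W

lemma hasFDerivAt_n₁ {z : ℝ × ℝ} (hz : z ∈ Metric.ball 0 r) : HasFDerivAt S.n₁
    (lin (-(S.W z)⁻¹ ^ 3 * ((1 + S.q z ^ 2) * S.a z - S.p z * S.q z * S.b z))
      (-(S.W z)⁻¹ ^ 3 * ((1 + S.q z ^ 2) * S.b z - S.p z * S.q z * S.c z))) z := by
  have := (S.hp z hz).neg.mul (S.hasFDerivAt_inv_W hz)
  refine this.congr_fderiv ?_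
  have e1 := S.inv_W_sq z
  generalize (S.W z)⁻¹ = w at *
  ext
  · simp
    linear_combination (w * S.a z) * e1
  · simp
    linear_combination (w * S.b z) * e1

lemma hasFDerivAt_n₂ {z : ℝ × ℝ} (hz : z ∈ Metric.ball 0 r) : HasFDerivAt S.n₂
    (lin (-(S.W z)⁻¹ ^ 3 * ((1 + S.p z ^ 2) * S.b z - S.p z * S.q z * S.a z))
      (-(S.W z)⁻¹ ^ 3 * ((1 + S.p z ^ 2) * S.c z - S.p z * S.q z * S.b z))) z := by
  have := (S.hq z hz).neg.mul (S.hasFDerivAt_inv_W hz)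
  refine this.congr_fderiv ?_
  have e1 := S.inv_W_sq z
  generalize (S.W z)⁻¹ = w at *
  ext
  · simp
    linear_combination (w * S.b z) * e1
  · simp
    linear_combination (w * S.c z) * e1

/-- The ratio of the area elements of the graph and of `ψ` is bounded above and below. -/
lemma W_div_D {z : ℝ × ℝ} (hz : |2 * H * S.u z| ≤ 1 / 2) :
    S.D z ≤ 25 / 4 * S.W z ∧ S.W z ≤ 2 * S.D z := by
  rw [abs_le] at hz
  have h1 := S.one_le_W z
  have h0 := S.n₃_pos z
  have h2 : (S.W z)⁻¹ ≤ 1 := inv_le_one_of_one_le₀ h1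
  rw [D_eq]
  rw [n₃] at h0
  generalize 2 * H * S.u z = c at *
  generalize (S.W z)⁻¹ = w at *
  generalize S.W z = W at *
  have hW := mul_nonneg (by linarith : 0 ≤ W - 1) h0.le
  constructor
  · calc (1 + c + w) * (1 + c + W) ≤ (5 / 2) * (5 / 2 * W) := by
          apply mul_le_mul <;> linarith [hz.1, hz.2]
      _ = _ := by ring
  · have : (1 / 2) * W ≤ (1 + c + w) * (1 + c + W) := by
      apply mul_le_mul <;> linarith [hz.1, hz.2]
    linarith

lemma det_A {z : ℝ × ℝ} (hz : |2 * H * S.u z| ≤ 1 / 2) :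
    (S.A z (1, 0)).1 * (S.A z (0, 1)).2 - (S.A z (0, 1)).1 * (S.A z (1, 0)).2 = (S.D z)⁻¹ := by
  have := (S.D_pos hz).ne'
  simp only [A]
  field_simp
  simp only [D]
  ring

end CMCDisk

namespace Chart
variable {H r ρ : ℝ} {S : CMCDisk H r} (C : Chart S ρ)

set_option maxHeartbeats 1000000 in
/-- The energy density of the Gauss map in the parameter `k` is controlled by its Jacobian. -/
lemma energy_le {k : ℝ × ℝ} (hk : k ∈ Metric.ball 0 ρ) :
    energy (fun k => S.n₁ (C.s k)) (fun k => S.n₂ (C.s k)) (fun k => S.n₃ (C.s k)) k ≤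
      400 * H ^ 2 - 100 * ((pdx (fun k => S.n₁ (C.s k)) k * pdy (fun k => S.n₂ (C.s k)) k -
        pdy (fun k => S.n₁ (C.s k)) k * pdx (fun k => S.n₂ (C.s k)) k) / S.n₃ (C.s k)) := by
  have hm := C.mem k hk
  have hs := C.small k hk
  simp only [energy]
  rw [(C.pd_comp hk (S.hasFDerivAt_n₁ hm)).1, (C.pd_comp hk (S.hasFDerivAt_n₁ hm)).2,
    (C.pd_comp hk (S.hasFDerivAt_n₂ hm)).1, (C.pd_comp hk (S.hasFDerivAt_n₂ hm)).2,
    (C.pd_comp (f := S.n₃) hk (S.hasFDerivAt_inv_W hm)).1,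
    (C.pd_comp (f := S.n₃) hk (S.hasFDerivAt_inv_W hm)).2]
  have g1 := S.metric_le hs (S.A (C.s k) (1, 0)).1 (S.A (C.s k) (1, 0)).2
  have g2 := S.metric_le hs (S.A (C.s k) (0, 1)).1 (S.A (C.s k) (0, 1)).2
  rw [(S.A_spec hs _).1, (S.A_spec hs _).2] at g1 g2
  have hdet := S.det_A hs
  have hD := S.W_div_D hs
  have hDp := S.D_pos hs
  have hE := S.eqn _ hm
  have hw2 := S.inv_W_sq (C.s k)
  have hWp := S.W_pos (C.s k)
  have hWw : (S.W (C.s k))⁻¹ * S.W (C.s k) = 1 := inv_mul_cancel₀ hWp.ne'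
  rw [← CMCDisk.W] at hE
  simp only [CMCDisk.n₃]
  have E1 := normal_energy_le (S.p (C.s k)) (S.q (C.s k)) (S.a (C.s k)) (S.b (C.s k)) (S.c (C.s k))
    (S.A (C.s k) (1, 0)).1 (S.A (C.s k) (1, 0)).2
  have E2 := normal_energy_le (S.p (C.s k)) (S.q (C.s k)) (S.a (C.s k)) (S.b (C.s k)) (S.c (C.s k))
    (S.A (C.s k) (0, 1)).1 (S.A (C.s k) (0, 1)).2
  have E0 := normal_energy_le (S.p (C.s k)) (S.q (C.s k)) (S.a (C.s k)) (S.b (C.s k)) (S.c (C.s k))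
    1 0
  generalize (S.A (C.s k) (1, 0)).1 = h₁ at *
  generalize (S.A (C.s k) (1, 0)).2 = h₂ at *
  generalize (S.A (C.s k) (0, 1)).1 = l₁ at *
  generalize (S.A (C.s k) (0, 1)).2 = l₂ at *
  rw [hE] at E1 E2 E0
  generalize S.p (C.s k) = p at *
  generalize S.q (C.s k) = q at *
  generalize S.a (C.s k) = a at *
  generalize S.b (C.s k) = b at *
  generalize S.c (C.s k) = c at *
  have hwp : 0 < (S.W (C.s k))⁻¹ := inv_pos.2 hWp
  generalize (S.W (C.s k))⁻¹ = w at *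
  generalize S.W (C.s k) = W at *
  generalize S.D (C.s k) = D at *
  set Δ := a * c - b ^ 2 with hΔ
  set G := (2 * H * W ^ 3) ^ 2 - 2 * (1 + p ^ 2 + q ^ 2) * Δ with hG
  have hG0 : 0 ≤ G := by
    have h := (mul_nonneg (quad_nonneg p q (a * 1 + b * 0) (b * 1 + c * 0))
      (by positivity : 0 ≤ 1 + p ^ 2 + q ^ 2)).trans E0
    exact nonneg_of_mul_nonneg_left h (by positivity)
  have F1 := E1.trans (mul_le_mul_of_nonneg_left g1 hG0)
  have F2 := E2.trans (mul_le_mul_of_nonneg_left g2 hG0)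
  norm_num at F1 F2
  have hww : w ^ 2 * (1 + p ^ 2 + q ^ 2) = 1 := hw2
  have hGw : w ^ 6 * G = 4 * H ^ 2 - 2 * (w ^ 4 * Δ) := by
    have : w ^ 6 * (2 * H * W ^ 3) ^ 2 = 4 * H ^ 2 := by
      calc w ^ 6 * (2 * H * W ^ 3) ^ 2 = 4 * H ^ 2 * (w * W) ^ 6 := by ring
        _ = _ := by rw [hWw]; ring
    rw [hG, mul_sub, this]
    linear_combination (-2 * w ^ 4 * Δ) * hww
  -- the Jacobian term equals `w³ Δ / D`
  have hκ : ((-w ^ 3 * ((1 + q ^ 2) * a - p * q * b) * h₁ +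
        -w ^ 3 * ((1 + q ^ 2) * b - p * q * c) * h₂) *
      (-w ^ 3 * ((1 + p ^ 2) * b - p * q * a) * l₁ + -w ^ 3 * ((1 + p ^ 2) * c - p * q * b) * l₂) -
      (-w ^ 3 * ((1 + q ^ 2) * a - p * q * b) * l₁ + -w ^ 3 * ((1 + q ^ 2) * b - p * q * c) * l₂) *
      (-w ^ 3 * ((1 + p ^ 2) * b - p * q * a) * h₁ +
        -w ^ 3 * ((1 + p ^ 2) * c - p * q * b) * h₂)) / w = w ^ 3 * Δ * D⁻¹ := by
    rw [div_eq_iff hwp.ne', ← hdet, hΔ]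
    linear_combination (w ^ 4 * (a * c - b ^ 2) * (h₁ * l₂ - l₁ * h₂)) * hww
  rw [hκ]
  have hE' : (-w ^ 3 * ((1 + q ^ 2) * a - p * q * b) * h₁ +
        -w ^ 3 * ((1 + q ^ 2) * b - p * q * c) * h₂) ^ 2 +
      (-w ^ 3 * ((1 + q ^ 2) * a - p * q * b) * l₁ +
        -w ^ 3 * ((1 + q ^ 2) * b - p * q * c) * l₂) ^ 2 +
      (-w ^ 3 * ((1 + p ^ 2) * b - p * q * a) * h₁ +
        -w ^ 3 * ((1 + p ^ 2) * c - p * q * b) * h₂) ^ 2 +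
      (-w ^ 3 * ((1 + p ^ 2) * b - p * q * a) * l₁ +
        -w ^ 3 * ((1 + p ^ 2) * c - p * q * b) * l₂) ^ 2 +
      (-w ^ 3 * (p * a + q * b) * h₁ + -w ^ 3 * (p * b + q * c) * h₂) ^ 2 +
      (-w ^ 3 * (p * a + q * b) * l₁ + -w ^ 3 * (p * b + q * c) * l₂) ^ 2 ≤ 8 * (w ^ 6 * G) := by
    have := mul_le_mul_of_nonneg_left (add_le_add F1 F2) (by positivity : 0 ≤ w ^ 6)
    refine le_trans (le_of_eq ?_) (this.trans (le_of_eq ?_)) <;> ring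
  refine hE'.trans ?_
  -- `W / D ∈ [4/25, 2]` turns the bound by `4H² - 2K` into a bound by the Jacobian
  have hj : w ^ 3 * Δ * D⁻¹ = (w ^ 4 * Δ) * (W * D⁻¹) := by
    linear_combination (-w ^ 3 * Δ * D⁻¹) * hWw
  have hj1 : 4 / 25 ≤ W * D⁻¹ := by
    rw [← div_eq_mul_inv, le_div_iff₀ hDp]; linarith [hD.1]
  have hj2 : W * D⁻¹ ≤ 2 := by
    rw [← div_eq_mul_inv, div_le_iff₀ hDp]; linarith [hD.2]
  have hGp : 0 ≤ w ^ 6 * G := by positivity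
  rw [hj]
  rw [hGw] at hGp ⊢
  generalize w ^ 4 * Δ = K at *
  generalize W * D⁻¹ = j at *
  have t1 := mul_nonneg hGp (sub_nonneg.2 hj1)
  have t2 := mul_nonneg (sq_nonneg H) (sub_nonneg.2 hj2)
  linarith

end Chart

/-! ### Circles on which the Gauss map is nearly constant -/

/-- Courant-Lebesgue: on some circle of radius in `[δ, τ]` the angular integral is small. -/
lemma exists_good_radius {f : ℝ × ℝ → ℝ} (hf : Continuous f) (hi : Integrable f)
    (h0 : ∀ z, 0 ≤ f z) {δ τ m : ℝ} (hδ : 0 < δ) (hδτ : δ ≤ τ)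
    (hE : ∫ z, f z < m * Real.log (τ / δ)) :
    ∃ t ∈ Icc δ τ, ∫ θ in (-π)..π, t ^ 2 * f (t * cos θ, t * sin θ) ≤ m := by
  by_contra! hcon
  set g : ℝ × ℝ → ℝ := fun p => p.1 * f (p.1 * cos p.2, p.1 * sin p.2) with hg
  have hgc : Continuous g := by fun_prop
  have hpi : -π ≤ π := by linarith [pi_pos]
  set B : Set (ℝ × ℝ) := Ioc δ τ ×ˢ Ioo (-π) π with hB
  have hBi : IntegrableOn g B := by
    refine (hgc.continuousOn.integrableOn_compact (isCompact_Icc.prod isCompact_Icc :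
      IsCompact (Icc δ τ ×ˢ Icc (-π) π))).mono_set ?_
    exact prod_mono Ioc_subset_Icc_self Ioo_subset_Icc_self
  have hBm : MeasurableSet B := measurableSet_Ioc.prod measurableSet_Ioo
  have hg0 : ∀ p ∈ B, 0 ≤ g p := fun p hp => mul_nonneg (hδ.le.trans hp.1.1.le) (h0 _)
  have h1 : ∫ p in B, g p ≤ ∫ z, f z := by
    have hfn : 0 ≤ ∫ z, f z := integral_nonneg h0
    rw [← ENNReal.ofReal_le_ofReal_iff hfn,
      ofReal_integral_eq_lintegral_ofReal hi (Eventually.of_forall h0),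
      ofReal_integral_eq_lintegral_ofReal hBi
        ((ae_restrict_iff' hBm).2 (Eventually.of_forall hg0)),
      ← lintegral_comp_polarCoord_symm]
    have hsub : B ⊆ polarCoord.target := by
      rw [polarCoord_target]
      exact prod_mono (fun t ht => hδ.trans ht.1) subset_rfl
    refine le_trans (le_of_eq ?_) (lintegral_mono_set hsub)
    refine setLIntegral_congr_fun hBm fun p hp => ?_
    simp only [hg, polarCoord_symm_apply, smul_eq_mul]
    rw [ENNReal.ofReal_mul (hδ.le.trans hp.1.1.le)]
  have h2 : ∫ p in B, g p = ∫ t in Ioc δ τ, ∫ θ in Ioo (-π) π, g (t, θ) := by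
    rw [Measure.volume_eq_prod] at hBi ⊢
    exact setIntegral_prod g hBi
  have h3 : m * Real.log (τ / δ) = ∫ t in Ioc δ τ, m * t⁻¹ := by
    rw [← intervalIntegral.integral_of_le hδτ, intervalIntegral.integral_const_mul,
      integral_inv_of_pos hδ (hδ.trans_le hδτ)]
  have h4 : ∫ t in Ioc δ τ, m * t⁻¹ ≤ ∫ t in Ioc δ τ, ∫ θ in Ioo (-π) π, g (t, θ) := by
    refine setIntegral_mono_on ?_ ?_ measurableSet_Ioc ?_
    · have : ContinuousOn (fun t : ℝ => m * t⁻¹) (Icc δ τ) :=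
        continuousOn_const.mul (continuousOn_inv₀.mono fun t ht => (hδ.trans_le ht.1).ne')
      exact (this.integrableOn_compact isCompact_Icc).mono_set Ioc_subset_Icc_self
    · have h5 : Continuous fun t => ∫ θ in (-π)..π, g (t, θ) :=
        intervalIntegral.continuous_parametric_intervalIntegral_of_continuous' (by fun_prop) _ _
      have h6 := (h5.continuousOn.integrableOn_compact (μ := volume)
        (isCompact_Icc (a := δ) (b := τ))).mono_set Ioc_subset_Icc_self
      refine h6.congr_fun (fun t _ => ?_) measurableSet_Ioc
      beta_reduce
      rw [intervalIntegral.integral_of_le hpi, integral_Ioc_eq_integral_Ioo]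
    · intro t ht
      have ht0 : 0 < t := hδ.trans ht.1
      have := (hcon t ⟨ht.1.le, ht.2⟩).le
      rw [← integral_Ioc_eq_integral_Ioo, ← intervalIntegral.integral_of_le hpi,
        ← div_eq_mul_inv, div_le_iff₀ ht0, ← intervalIntegral.integral_mul_const]
      refine this.trans (le_of_eq ?_)
      congr 1
      ext θ
      simp only [hg]
      ring
  linarith

/-- A `C¹` function on a circle has small oscillation if its angular energy is small. -/
lemma circle_osc {h : ℝ → ℝ} {h' : ℝ → ℝ} (hd : ∀ θ, HasDerivAt h (h' θ) θ) (hc : Continuous h')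
    {μ : ℝ} (hμ : 0 < μ) (hE : ∫ θ in (-π)..π, h' θ ^ 2 ≤ μ ^ 2) {θ : ℝ}
    (hθ : θ ∈ Icc (-π) π) : |h θ - h (-π)| ≤ 4 * μ := by
  have hpi : -π ≤ π := by linarith [pi_pos]
  have e : h θ - h (-π) = ∫ x in (-π)..θ, h' x :=
    (intervalIntegral.integral_eq_sub_of_hasDerivAt (fun x _ => hd x)
      (hc.intervalIntegrable _ _)).symm
  rw [e]
  calc |∫ x in (-π)..θ, h' x| ≤ ∫ x in (-π)..θ, |h' x| :=
        intervalIntegral.abs_integral_le_integral_abs hθ.1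
    _ ≤ ∫ x in (-π)..π, |h' x| := by
        refine intervalIntegral.integral_mono_interval le_rfl hθ.1 hθ.2
          (Eventually.of_forall fun x => abs_nonneg _) (hc.abs.intervalIntegrable _ _)
    _ ≤ ∫ x in (-π)..π, ((1 / (2 * μ)) * h' x ^ 2 + μ / 2) := by
        refine intervalIntegral.integral_mono_on hpi (hc.abs.intervalIntegrable _ _)
          (Continuous.intervalIntegrable (by fun_prop) _ _) (fun x _ => ?_)
        have : 0 ≤ (|h' x| - μ) ^ 2 := sq_nonneg _
        rw [← sq_abs (h' x)]
        field_simp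
        nlinarith
    _ = (1 / (2 * μ)) * (∫ x in (-π)..π, h' x ^ 2) + μ * π := by
        rw [intervalIntegral.integral_add (Continuous.intervalIntegrable (by fun_prop) _ _)
          (Continuous.intervalIntegrable (by fun_prop) _ _), intervalIntegral.integral_const_mul,
          intervalIntegral.integral_const, smul_eq_mul]
        ring
    _ ≤ (1 / (2 * μ)) * μ ^ 2 + μ * π := by gcongr
    _ ≤ 4 * μ := by
        have : (1 / (2 * μ)) * μ ^ 2 = μ / 2 := by field_simp
        rw [this]
        nlinarith [pi_lt_d2]

lemma circle_mem_ball {ρ t : ℝ} (ht : 0 < t) (htρ : t < ρ) (θ : ℝ) :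
    (t * cos θ, t * sin θ) ∈ Metric.ball (0 : ℝ × ℝ) ρ := by
  rw [mem_ball_zero_iff, Prod.norm_def, max_lt_iff]
  simp only [Real.norm_eq_abs, abs_mul, abs_of_pos ht]
  constructor
  · nlinarith [abs_cos_le_one θ]
  · nlinarith [abs_sin_le_one θ]

lemma exists_angle {t : ℝ} (ht : 0 < t) {k : ℝ × ℝ} (hk : k.1 ^ 2 + k.2 ^ 2 = t ^ 2) :
    ∃ θ ∈ Icc (-π) π, k = (t * cos θ, t * sin θ) := by
  set w : ℂ := ⟨k.1, k.2⟩ with hw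
  have hn : ‖w‖ = t := by
    rw [← abs_of_nonneg (norm_nonneg w), ← abs_of_pos ht, ← sq_eq_sq_iff_abs_eq_abs, Complex.sq_norm,
      Complex.normSq_apply, ← hk]
    simp [hw]
    ring
  refine ⟨w.arg, ⟨(Complex.neg_pi_lt_arg w).le, Complex.arg_le_pi w⟩, ?_⟩
  rw [← hn, Complex.norm_mul_cos_arg, Complex.norm_mul_sin_arg]

lemma osc_le_of_energy {ρ t μ : ℝ} (ht : 0 < t) (htρ : t < ρ) (hμ : 0 < μ) {g F : ℝ × ℝ → ℝ}
    (hg : ContDiffOn ℝ 1 g (Metric.ball 0 ρ)) (hF : Continuous F)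
    (hgF : ∀ θ, pdx g (t * cos θ, t * sin θ) ^ 2 + pdy g (t * cos θ, t * sin θ) ^ 2 ≤
      F (t * cos θ, t * sin θ))
    (hE : ∫ θ in (-π)..π, t ^ 2 * F (t * cos θ, t * sin θ) ≤ μ ^ 2) {k : ℝ × ℝ}
    (hk : k.1 ^ 2 + k.2 ^ 2 = t ^ 2) : |g k - g (-t, 0)| ≤ 4 * μ := by
  obtain ⟨θ, hθ, rfl⟩ := exists_angle ht hk
  have hm := circle_mem_ball ht htρ
  set γ : ℝ → ℝ × ℝ := fun θ => (t * cos θ, t * sin θ) with hγ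
  have hγc : Continuous γ := by fun_prop
  have hγd : ∀ θ, HasDerivAt γ (t * -sin θ, t * cos θ) θ := fun θ =>
    ((hasDerivAt_cos θ).const_mul t).prodMk ((hasDerivAt_sin θ).const_mul t)
  have hc := continuousOn_pd Metric.isOpen_ball hg
  have c1 : Continuous fun θ => pdx g (γ θ) := hc.1.comp_continuous hγc hm
  have c2 : Continuous fun θ => pdy g (γ θ) := hc.2.comp_continuous hγc hm
  have hd : ∀ θ, HasDerivAt (fun θ => g (γ θ))
      (pdx g (γ θ) * (t * -sin θ) + pdy g (γ θ) * (t * cos θ)) θ := fun θ => by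
    have h1 : DifferentiableAt ℝ g (γ θ) :=
      (hg.differentiableOn one_ne_zero).differentiableAt (Metric.isOpen_ball.mem_nhds (hm θ))
    have := h1.hasFDerivAt.comp_hasDerivAt θ (hγd θ)
    refine this.congr_deriv ?_
    rw [eq_lin (fderiv ℝ g (γ θ))]
    simp [pdx, pdy]
  have hc' : Continuous fun θ => pdx g (γ θ) * (t * -sin θ) + pdy g (γ θ) * (t * cos θ) := by
    fun_prop
  have key := circle_osc hd hc' hμ ?_ hθ
  · have e : γ (-π) = (-t, 0) := by simp [hγ]
    rw [e] at key
    exact key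
  · refine le_trans ?_ hE
    refine intervalIntegral.integral_mono_on (by linarith [pi_pos])
      ((hc'.pow 2).intervalIntegrable _ _) (Continuous.intervalIntegrable (by fun_prop) _ _)
      (fun θ _ => ?_)
    refine le_trans ?_ (mul_le_mul_of_nonneg_left (hgF θ) (sq_nonneg t))
    have := sin_sq_add_cos_sq θ
    have h2 : (pdx g (γ θ) ^ 2 + pdy g (γ θ) ^ 2) =
        (pdx g (γ θ) ^ 2 + pdy g (γ θ) ^ 2) * (sin θ ^ 2 + cos θ ^ 2) := by rw [this, mul_one]
    change _ ≤ t ^ 2 * (pdx g (γ θ) ^ 2 + pdy g (γ θ) ^ 2)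
    rw [h2]
    nlinarith [mul_nonneg (sq_nonneg t) (sq_nonneg (pdx g (γ θ) * cos θ + pdy g (γ θ) * sin θ))]

/-- Some parameter circle, of radius bounded below in terms of `H`, `ρ` and `μ` only, is mapped by
the Gauss map to a set of small diameter. -/
lemma exists_good_circle {H ρ μ : ℝ} (hρ : 0 < ρ) (hμ : 0 < μ) :
    ∃ δ > 0, ∀ (r : ℝ) (S : CMCDisk H r) (C : Chart S ρ), ∃ t ∈ Icc δ (ρ / 2),
      ∀ k : ℝ × ℝ, k.1 ^ 2 + k.2 ^ 2 = t ^ 2 →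
        |S.n₁ (C.s k) - S.n₁ (C.s (-t, 0))| ≤ 4 * μ ∧
        |S.n₂ (C.s k) - S.n₂ (C.s (-t, 0))| ≤ 4 * μ ∧
        |S.n₃ (C.s k) - S.n₃ (C.s (-t, 0))| ≤ 4 * μ := by
  obtain ⟨η, hη, hηc, hηs, -, hη1⟩ := exists_cutoff (isCompact_closedBall (0 : ℝ × ℝ) (ρ / 2))
    (Metric.isOpen_ball (x := 0) (ε := ρ)) (Metric.closedBall_subset_ball (by linarith))
  set E := ∫ z, 2 * (400 * H ^ 2 * η z ^ 2 + 4 * (100 : ℝ) ^ 2 * (pdx η z ^ 2 + pdy η z ^ 2))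
    with hE
  have hE0 : 0 ≤ E := integral_nonneg fun z => by positivity
  have hδ2 : 0 < ρ / 2 * exp (-(E / μ ^ 2 + 1)) := by positivity
  have hle : ρ / 2 * exp (-(E / μ ^ 2 + 1)) ≤ ρ / 2 := by
    have : exp (-(E / μ ^ 2 + 1)) ≤ 1 := by
      rw [exp_le_one_iff]
      have : 0 ≤ E / μ ^ 2 := by positivity
      linarith
    nlinarith
  refine ⟨_, hδ2, fun r S C => ?_⟩
  have hm : MapsTo C.s (Metric.ball 0 ρ) (Metric.ball 0 r) := C.mem
  have g₁ : ContDiffOn ℝ 1 (fun k => S.n₁ (C.s k)) (Metric.ball 0 ρ) :=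
    S.contDiffOn_n₁.comp C.contDiffOn_s hm
  have g₂ : ContDiffOn ℝ 1 (fun k => S.n₂ (C.s k)) (Metric.ball 0 ρ) :=
    S.contDiffOn_n₂.comp C.contDiffOn_s hm
  have g₃ : ContDiffOn ℝ 1 (fun k => S.n₃ (C.s k)) (Metric.ball 0 ρ) :=
    S.contDiffOn_n₃.comp C.contDiffOn_s hm
  have hb := energy_bound Metric.isOpen_ball g₁ g₂ g₃ (fun z _ => S.n_unit _)
    (fun z _ => S.n₃_pos _) (fun z hz => C.energy_le hz) hη hηc hηs
  rw [← hE] at hb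
  set e := energy (fun k => S.n₁ (C.s k)) (fun k => S.n₂ (C.s k)) (fun k => S.n₃ (C.s k)) with he
  have hce : ContinuousOn e (Metric.ball 0 ρ) := by
    have c₁ := continuousOn_pd Metric.isOpen_ball g₁
    have c₂ := continuousOn_pd Metric.isOpen_ball g₂
    have c₃ := continuousOn_pd Metric.isOpen_ball g₃
    exact (((((c₁.1.pow 2).add (c₁.2.pow 2)).add (c₂.1.pow 2)).add (c₂.2.pow 2)).add
      (c₃.1.pow 2)).add (c₃.2.pow 2)
  have h0 : ∀ z ∉ tsupport η, η z ^ 2 * e z = 0 := fun z hz => by simp [(pd_eq_zero hz).1]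
  have hfc : Continuous fun z => η z ^ 2 * e z :=
    continuous_of_tsupport Metric.isOpen_ball (isClosed_tsupport η) hηs h0
      ((hη.continuous.pow 2).continuousOn.mul hce)
  have hfi : Integrable fun z => η z ^ 2 * e z :=
    hfc.integrable_of_hasCompactSupport (HasCompactSupport.intro hηc h0)
  have he0 : ∀ z, 0 ≤ e z := fun z => by simp only [he, energy]; positivity
  obtain ⟨t, ht, hti⟩ := exists_good_radius (m := μ ^ 2) hfc hfi
    (fun z => mul_nonneg (sq_nonneg _) (he0 z)) hδ2 hle (by
      have e2 : ρ / 2 / (ρ / 2 * exp (-(E / μ ^ 2 + 1))) = exp (E / μ ^ 2 + 1) := by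
        rw [exp_neg]
        field_simp
      rw [e2, log_exp]
      have : μ ^ 2 * (E / μ ^ 2 + 1) = E + μ ^ 2 := by field_simp
      rw [this]
      have : 0 < μ ^ 2 := by positivity
      linarith)
  have ht0 : 0 < t := hδ2.trans_le ht.1
  have htρ : t < ρ := by linarith [ht.2]
  have hη1' : ∀ θ, η (t * cos θ, t * sin θ) = 1 := fun θ => by
    refine hη1 _ ?_
    rw [mem_closedBall_zero_iff, Prod.norm_def, max_le_iff]
    simp only [Real.norm_eq_abs, abs_mul, abs_of_pos ht0]
    constructor
    · nlinarith [abs_cos_le_one θ, ht.2]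
    · nlinarith [abs_sin_le_one θ, ht.2]
  refine ⟨t, ht, fun k hk => ⟨?_, ?_, ?_⟩⟩
  · refine osc_le_of_energy ht0 htρ hμ g₁ hfc (fun θ => ?_) hti hk
    rw [hη1', one_pow, one_mul]
    simp only [he, energy]
    nlinarith [sq_nonneg (pdx (fun k => S.n₂ (C.s k)) (t * cos θ, t * sin θ)),
      sq_nonneg (pdy (fun k => S.n₂ (C.s k)) (t * cos θ, t * sin θ)),
      sq_nonneg (pdx (fun k => S.n₃ (C.s k)) (t * cos θ, t * sin θ)),
      sq_nonneg (pdy (fun k => S.n₃ (C.s k)) (t * cos θ, t * sin θ))]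
  · refine osc_le_of_energy ht0 htρ hμ g₂ hfc (fun θ => ?_) hti hk
    rw [hη1', one_pow, one_mul]
    simp only [he, energy]
    nlinarith [sq_nonneg (pdx (fun k => S.n₁ (C.s k)) (t * cos θ, t * sin θ)),
      sq_nonneg (pdy (fun k => S.n₁ (C.s k)) (t * cos θ, t * sin θ)),
      sq_nonneg (pdx (fun k => S.n₃ (C.s k)) (t * cos θ, t * sin θ)),
      sq_nonneg (pdy (fun k => S.n₃ (C.s k)) (t * cos θ, t * sin θ))]
  · refine osc_le_of_energy ht0 htρ hμ g₃ hfc (fun θ => ?_) hti hk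
    rw [hη1', one_pow, one_mul]
    simp only [he, energy]
    nlinarith [sq_nonneg (pdx (fun k => S.n₁ (C.s k)) (t * cos θ, t * sin θ)),
      sq_nonneg (pdy (fun k => S.n₁ (C.s k)) (t * cos θ, t * sin θ)),
      sq_nonneg (pdx (fun k => S.n₂ (C.s k)) (t * cos θ, t * sin θ)),
      sq_nonneg (pdy (fun k => S.n₂ (C.s k)) (t * cos θ, t * sin θ))]

/-! ### The comparison principle -/

/-- Second order necessary condition for a minimum; only the second derivative at the point itself
is assumed to exist. -/
lemma second_deriv_nonneg {f f' : ℝ → ℝ} {x m : ℝ} (h1 : ∀ᶠ y in 𝓝 x, HasDerivAt f (f' y) y)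
    (h2 : HasDerivAt f' m x) (hmin : IsLocalMin f x) : 0 ≤ m := by
  by_contra! hm
  have e1 : deriv f =ᶠ[𝓝 x] f' := by
    filter_upwards [h1] with y hy using hy.deriv
  have e2 : deriv (deriv f) x = m := by rw [e1.deriv_eq, h2.deriv]
  have hmax := isLocalMax_of_deriv_deriv_neg (f := f) (x₀ := x) (by rwa [e2]) hmin.deriv_eq_zero
    h1.self_of_nhds.continuousAt
  have hc : f =ᶠ[𝓝 x] fun _ => f x := by
    filter_upwards [hmin, hmax] with y hy hy' using le_antisymm hy' hy
  have e3 : deriv f =ᶠ[𝓝 x] fun _ => 0 := by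
    have := hc.deriv
    filter_upwards [this] with y hy
    rw [hy]; simp
  have : deriv (deriv f) x = 0 := by rw [e3.deriv_eq]; simp
  linarith

lemma min_conditions {f p q : ℝ × ℝ → ℝ} {a b c : ℝ} {z : ℝ × ℝ}
    (hf : ∀ᶠ w in 𝓝 z, HasFDerivAt f (lin (p w) (q w)) w) (hp : HasFDerivAt p (lin a b) z)
    (hq : HasFDerivAt q (lin b c) z) (hmin : IsLocalMin f z) :
    p z = 0 ∧ q z = 0 ∧ ∀ v w : ℝ, 0 ≤ a * v ^ 2 + 2 * b * v * w + c * w ^ 2 := by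
  have h0 := hmin.hasFDerivAt_eq_zero hf.self_of_nhds
  refine ⟨by simpa using DFunLike.congr_fun h0 (1, 0), by simpa using DFunLike.congr_fun h0 (0, 1),
    fun v w => ?_⟩
  set γ : ℝ → ℝ × ℝ := fun t => (z.1 + t * v, z.2 + t * w) with hγ
  have hγ0 : γ 0 = z := by simp [hγ]
  have hγc : Continuous γ := by fun_prop
  have hγt : Tendsto γ (𝓝 0) (𝓝 z) := by simpa [hγ0] using hγc.tendsto 0
  have hγd : ∀ t, HasDerivAt γ (v, w) t := fun t => by
    have h1 : HasDerivAt (fun t => z.1 + t * v) v t := by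
      simpa using ((hasDerivAt_id t).mul_const v).const_add z.1
    have h2 : HasDerivAt (fun t => z.2 + t * w) w t := by
      simpa using ((hasDerivAt_id t).mul_const w).const_add z.2
    exact h1.prodMk h2
  have k1 : ∀ᶠ t in 𝓝 (0 : ℝ), HasDerivAt (fun t => f (γ t)) (p (γ t) * v + q (γ t) * w) t := by
    filter_upwards [hγt.eventually hf] with t ht
    exact ht.comp_hasDerivAt t (hγd t)
  have k2 : HasDerivAt (fun t => p (γ t) * v + q (γ t) * w)
      ((a * v + b * w) * v + (b * v + c * w) * w) 0 := by
    rw [← hγ0] at hp hq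
    have h1 : HasDerivAt (fun t => p (γ t)) (a * v + b * w) 0 := by
      exact hp.comp_hasDerivAt (0 : ℝ) (hγd 0)
    have h2 : HasDerivAt (fun t => q (γ t)) (b * v + c * w) 0 := by
      exact hq.comp_hasDerivAt (0 : ℝ) (hγd 0)
    exact (h1.mul_const v).add (h2.mul_const w)
  have k3 : IsLocalMin (fun t => f (γ t)) 0 := by
    have := hγt.eventually hmin
    filter_upwards [this] with t ht
    rw [hγ0]; exact ht
  have := second_deriv_nonneg k1 k2 k3
  linarith

/-- The pointwise contradiction behind the comparison principle: at an interior minimum of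
`u₁ - u₂ - ε exp (Λ x)`, with `θ = ε exp (Λ x)`, the constant `Λ` is bounded. -/
lemma comparison_pointwise {H p₁ q₁ a₁ b₁ c₁ p₂ q₂ a₂ b₂ c₂ θ Λ B : ℝ} (hH : 0 < H) (hθ : 0 < θ)
    (hΛ : 0 < Λ)
    (e₁ : (1 + q₁ ^ 2) * a₁ - 2 * p₁ * q₁ * b₁ + (1 + p₁ ^ 2) * c₁ =
      2 * H * √(1 + p₁ ^ 2 + q₁ ^ 2) ^ 3)
    (e₂ : (1 + q₂ ^ 2) * a₂ - 2 * p₂ * q₂ * b₂ + (1 + p₂ ^ 2) * c₂ =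
      2 * H * √(1 + p₂ ^ 2 + q₂ ^ 2) ^ 3)
    (hp : p₁ - p₂ - θ * Λ = 0) (hq : q₁ - q₂ = 0)
    (hess : ∀ v w : ℝ, 0 ≤ (a₁ - a₂ - θ * Λ ^ 2) * v ^ 2 + 2 * (b₁ - b₂) * v * w +
      (c₁ - c₂) * w ^ 2)
    (B₁ : |p₁| ≤ B) (B₂ : |q₁| ≤ B) (B₃ : |p₂| ≤ B) (B₅ : |b₂| ≤ B) (B₆ : |c₂| ≤ B) :
    Λ ≤ 6 * H * (1 + 2 * B ^ 2) + 4 * B ^ 2 := by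
  obtain rfl : q₁ = q₂ := by linarith
  have hB : 0 ≤ B := (abs_nonneg _).trans B₁
  set W₁ := √(1 + p₁ ^ 2 + q₁ ^ 2) with hW₁
  set W₂ := √(1 + p₂ ^ 2 + q₁ ^ 2) with hW₂
  have s₁ : W₁ ^ 2 = 1 + p₁ ^ 2 + q₁ ^ 2 := Real.sq_sqrt (by positivity)
  have s₂ : W₂ ^ 2 = 1 + p₂ ^ 2 + q₁ ^ 2 := Real.sq_sqrt (by positivity)
  have g₁ : 0 < W₁ := Real.sqrt_pos.2 (by positivity)
  have g₂ : 0 < W₂ := Real.sqrt_pos.2 (by positivity)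
  have l₁ : |p₁| ≤ W₁ := Real.abs_le_sqrt (by linarith [sq_nonneg q₁, sq_nonneg p₁])
  have l₂ : |p₂| ≤ W₂ := Real.abs_le_sqrt (by linarith [sq_nonneg q₁, sq_nonneg p₂])
  have hP₁ : p₁ ^ 2 ≤ B ^ 2 := by rw [← sq_abs]; gcongr
  have hP₂ : p₂ ^ 2 ≤ B ^ 2 := by rw [← sq_abs p₂]; gcongr
  have hQ : q₁ ^ 2 ≤ B ^ 2 := by rw [← sq_abs q₁]; gcongr
  have hθΛ : 0 < θ * Λ := mul_pos hθ hΛ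
  have hW : W₁ - W₂ ≤ θ * Λ := by
    have h1 : (W₁ - W₂) * (W₁ + W₂) = θ * Λ * (p₁ + p₂) := by
      have : p₁ - p₂ = θ * Λ := by linarith
      rw [← this]
      linear_combination s₁ - s₂
    have h2 : θ * Λ * (p₁ + p₂) ≤ θ * Λ * (W₁ + W₂) := by
      gcongr
      · exact (le_abs_self _).trans l₁
      · exact (le_abs_self _).trans l₂
    rw [← h1] at h2
    exact le_of_mul_le_mul_right h2 (by positivity)
  have hS : W₁ ^ 2 + W₁ * W₂ + W₂ ^ 2 ≤ 3 * (1 + 2 * B ^ 2) := by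
    linarith [two_mul_le_add_sq W₁ W₂]
  have hcube : W₁ ^ 3 - W₂ ^ 3 ≤ θ * Λ * (3 * (1 + 2 * B ^ 2)) := by
    have : W₁ ^ 3 - W₂ ^ 3 = (W₁ - W₂) * (W₁ ^ 2 + W₁ * W₂ + W₂ ^ 2) := by ring
    rw [this]
    exact (mul_le_mul_of_nonneg_right hW (by positivity)).trans
      (mul_le_mul_of_nonneg_left hS hθΛ.le)
  have h1 := hess 1 0
  have h2 := hess 0 1
  have h3 := hess q₁ (-p₁)
  have hqb : |q₁ * b₂| ≤ B * B := by rw [abs_mul]; gcongr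
  have hpc₁ : |p₁ * c₂| ≤ B * B := by rw [abs_mul]; gcongr
  have hpc₂ : |p₂ * c₂| ≤ B * B := by rw [abs_mul]; gcongr
  rw [abs_le] at hqb hpc₁ hpc₂
  have hrest : θ * Λ * (2 * (q₁ * b₂) - p₁ * c₂ - p₂ * c₂) ≤ θ * Λ * (4 * B ^ 2) :=
    mul_le_mul_of_nonneg_left (by linarith) hθΛ.le
  have key : θ * Λ * Λ * (1 + q₁ ^ 2) ≤
      2 * H * (W₁ ^ 3 - W₂ ^ 3) + θ * Λ * (2 * (q₁ * b₂) - p₁ * c₂ - p₂ * c₂) := by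
    have hp' : θ * Λ = p₁ - p₂ := by linarith
    have e : 2 * H * (W₁ ^ 3 - W₂ ^ 3) + (p₁ - p₂) * (2 * (q₁ * b₂) - p₁ * c₂ - p₂ * c₂) =
        (1 + q₁ ^ 2) * (a₁ - a₂) - 2 * p₁ * q₁ * (b₁ - b₂) + (1 + p₁ ^ 2) * (c₁ - c₂) := by
      linear_combination e₂ - e₁
    nth_rewrite 2 [hp']
    rw [e]
    linarith
  have hH' : 2 * H * (W₁ ^ 3 - W₂ ^ 3) ≤ 2 * H * (θ * Λ * (3 * (1 + 2 * B ^ 2))) :=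
    mul_le_mul_of_nonneg_left hcube (by positivity)
  have hq0 : θ * Λ * Λ ≤ θ * Λ * Λ * (1 + q₁ ^ 2) :=
    le_mul_of_one_le_right (by positivity) (by linarith [sq_nonneg q₁])
  have : θ * Λ * Λ ≤ θ * Λ * (6 * H * (1 + 2 * B ^ 2) + 4 * B ^ 2) := by linarith
  exact le_of_mul_le_mul_left this hθΛ

/-- Comparison principle for two solutions of the mean curvature equation on a compact set `K`, with
`Γ` playing the role of the boundary of `K`. -/
lemma comparison {H : ℝ} (hH : 0 < H) {K Γ : Set (ℝ × ℝ)} (hK : IsCompact K)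
    (h_int : ∀ z ∈ K, z ∉ Γ → K ∈ 𝓝 z)
    {u₁ p₁ q₁ a₁ b₁ c₁ u₂ p₂ q₂ a₂ b₂ c₂ : ℝ × ℝ → ℝ}
    (hu₁ : ∀ z ∈ K, HasFDerivAt u₁ (lin (p₁ z) (q₁ z)) z)
    (hp₁ : ∀ z ∈ K, HasFDerivAt p₁ (lin (a₁ z) (b₁ z)) z)
    (hq₁ : ∀ z ∈ K, HasFDerivAt q₁ (lin (b₁ z) (c₁ z)) z)
    (e₁ : ∀ z ∈ K, (1 + q₁ z ^ 2) * a₁ z - 2 * p₁ z * q₁ z * b₁ z + (1 + p₁ z ^ 2) * c₁ z =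
      2 * H * √(1 + p₁ z ^ 2 + q₁ z ^ 2) ^ 3)
    (hu₂ : ∀ z ∈ K, HasFDerivAt u₂ (lin (p₂ z) (q₂ z)) z)
    (hp₂ : ∀ z ∈ K, HasFDerivAt p₂ (lin (a₂ z) (b₂ z)) z)
    (hq₂ : ∀ z ∈ K, HasFDerivAt q₂ (lin (b₂ z) (c₂ z)) z)
    (hb₂ : ContinuousOn b₂ K) (hc₂ : ContinuousOn c₂ K)
    (e₂ : ∀ z ∈ K, (1 + q₂ z ^ 2) * a₂ z - 2 * p₂ z * q₂ z * b₂ z + (1 + p₂ z ^ 2) * c₂ z =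
      2 * H * √(1 + p₂ z ^ 2 + q₂ z ^ 2) ^ 3)
    {m : ℝ} (hm : ∀ z ∈ K, z ∈ Γ → m ≤ u₁ z - u₂ z) : ∀ z ∈ K, m ≤ u₁ z - u₂ z := by
  intro z₀ hz₀
  by_contra! hlt
  have co : ∀ {f f₁ f₂ : ℝ × ℝ → ℝ}, (∀ z ∈ K, HasFDerivAt f (lin (f₁ z) (f₂ z)) z) →
    ContinuousOn f K := fun h z hz => (h z hz).continuousAt.continuousWithinAt
  obtain ⟨B, hB⟩ := hK.exists_bound_of_continuousOn
    ((co hp₁).prodMk ((co hq₁).prodMk ((co hp₂).prodMk (hb₂.prodMk hc₂))))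
  simp only [Prod.norm_def, sup_le_iff, Real.norm_eq_abs] at hB
  set Λ := 6 * H * (1 + 2 * B ^ 2) + 4 * B ^ 2 + 1 with hΛ
  have hΛ0 : 0 < Λ := by positivity
  have hexp : Continuous fun z : ℝ × ℝ => exp (Λ * z.1) := by fun_prop
  obtain ⟨E, hE⟩ := hK.exists_bound_of_continuousOn hexp.continuousOn
  simp only [Real.norm_eq_abs, abs_exp] at hE
  have hE0 : 0 < E := (exp_pos _).trans_le (hE z₀ hz₀)
  set ε := (m - (u₁ z₀ - u₂ z₀)) / E with hε
  have hε0 : 0 < ε := div_pos (by linarith) hE0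
  have hεE : ε * E = m - (u₁ z₀ - u₂ z₀) := div_mul_cancel₀ _ hE0.ne'
  set g : ℝ × ℝ → ℝ := fun z => u₁ z - u₂ z - ε * exp (Λ * z.1) with hg
  have hgc : ContinuousOn g K :=
    ((co hu₁).sub (co hu₂)).sub (continuousOn_const.mul hexp.continuousOn)
  obtain ⟨z, hz, hzmin⟩ := hK.exists_isMinOn ⟨z₀, hz₀⟩ hgc
  have hzΓ : z ∉ Γ := fun hzΓ => by
    have h1 : g z ≤ g z₀ := hzmin hz₀
    have h2 := hm z hz hzΓ
    have h3 := mul_le_mul_of_nonneg_left (hE z hz) hε0.le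
    have h4 : 0 < ε * exp (Λ * z₀.1) := by positivity
    simp only [hg] at h1
    linarith
  have hnhds := h_int z hz hzΓ
  have hloc : IsLocalMin g z := hzmin.isLocalMin hnhds
  have hexpd : ∀ (κ : ℝ) (w : ℝ × ℝ), HasFDerivAt (fun w : ℝ × ℝ => κ * exp (Λ * w.1))
      (lin (κ * exp (Λ * w.1) * Λ) 0) w := fun κ w => by
    have h1 : HasFDerivAt (fun w : ℝ × ℝ => Λ * w.1) (Λ • ContinuousLinearMap.fst ℝ ℝ ℝ) w :=
      hasFDerivAt_fst.const_mul Λ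
    refine (h1.exp.const_mul κ).congr_fderiv ?_
    ext <;> simp <;> ring
  have d0 : ∀ᶠ w in 𝓝 z, HasFDerivAt g
      (lin (p₁ w - p₂ w - ε * Λ * exp (Λ * w.1)) (q₁ w - q₂ w)) w := by
    filter_upwards [hnhds] with w hw
    refine (((hu₁ w hw).sub (hu₂ w hw)).sub (hexpd ε w)).congr_fderiv ?_
    ext <;> simp <;> ring
  have d1 : HasFDerivAt (fun w => p₁ w - p₂ w - ε * Λ * exp (Λ * w.1))
      (lin (a₁ z - a₂ z - ε * exp (Λ * z.1) * Λ ^ 2) (b₁ z - b₂ z)) z := by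
    refine (((hp₁ z hz).sub (hp₂ z hz)).sub (hexpd (ε * Λ) z)).congr_fderiv ?_
    ext <;> simp <;> ring
  have d2 : HasFDerivAt (fun w => q₁ w - q₂ w) (lin (b₁ z - b₂ z) (c₁ z - c₂ z)) z := by
    refine ((hq₁ z hz).sub (hq₂ z hz)).congr_fderiv ?_
    ext <;> simp
  obtain ⟨k1, k2, k3⟩ := min_conditions d0 d1 d2 hloc
  obtain ⟨B₁, B₂, B₃, B₅, B₆⟩ := hB z hz
  have := comparison_pointwise (θ := ε * exp (Λ * z.1)) hH (by positivity) hΛ0 (e₁ z hz) (e₂ z hz)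
    (by linarith) k2 k3 B₁ B₂ B₃ B₅ B₆
  linarith

/-! ### Half-spaces and the Gauss map -/

/-- The closed Euclidean disc of radius `t`. -/
def disc (t : ℝ) : Set (ℝ × ℝ) := {k | k.1 ^ 2 + k.2 ^ 2 ≤ t ^ 2}

lemma disc_subset_closedBall {t : ℝ} (ht : 0 ≤ t) : disc t ⊆ Metric.closedBall 0 t := by
  intro k hk
  simp only [disc, mem_ofPred_eq] at hk
  rw [mem_closedBall_zero_iff, Prod.norm_def, max_le_iff]
  exact ⟨abs_le_of_sq_le_sq (by linarith [sq_nonneg k.2]) ht,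
    abs_le_of_sq_le_sq (by linarith [sq_nonneg k.1]) ht⟩

lemma isCompact_disc {t : ℝ} (ht : 0 ≤ t) : IsCompact (disc t) :=
  (isCompact_closedBall (0 : ℝ × ℝ) t).of_isClosed_subset
    (isClosed_le (by fun_prop) (by fun_prop)) (disc_subset_closedBall ht)

namespace Chart
variable {H r ρ : ℝ} {S : CMCDisk H r} (C : Chart S ρ)

lemma disc_subset {t : ℝ} (ht : 0 < t) (htρ : t < ρ) : disc t ⊆ Metric.ball 0 ρ :=
  (disc_subset_closedBall ht.le).trans (Metric.closedBall_subset_ball htρ)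

lemma image_disc_mem_nhds {t : ℝ} (ht : 0 < t) (htρ : t < ρ) {k : ℝ × ℝ}
    (hk : k.1 ^ 2 + k.2 ^ 2 < t ^ 2) : C.s '' disc t ∈ 𝓝 (C.s k) := by
  have hkρ := disc_subset ht htρ hk.le
  have hc : ContinuousAt C.ψ (C.s k) :=
    (C.hasStrictFDerivAt_ψ (C.mem k hkρ) (C.small k hkρ)).continuousAt
  have hopen : IsOpen {k : ℝ × ℝ | k.1 ^ 2 + k.2 ^ 2 < t ^ 2} :=
    isOpen_lt (by fun_prop) (by fun_prop)
  have hn := hopen.mem_nhds (x := C.ψ (C.s k)) (by rwa [C.ψ_s hkρ])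
  filter_upwards [C.eventually_s_ψ hkρ, hc hn] with z h1 h2
  have h3 : (C.ψ z).1 ^ 2 + (C.ψ z).2 ^ 2 < t ^ 2 := h2
  exact ⟨C.ψ z, h3.le, h1.2⟩

/-- If the Gauss map sends a parameter circle into a half-space through the origin, it sends the
disc bounded by that circle into the same half-space.  This is the comparison principle for the
solution and its translates, in the limit of infinitesimal translations. -/
lemma halfspace (hH : 0 < H) {t : ℝ} (ht : 0 < t) (htρ : t < ρ) {α β γ : ℝ}
    (hΓ : ∀ k : ℝ × ℝ, k.1 ^ 2 + k.2 ^ 2 = t ^ 2 →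
      0 ≤ α * S.n₁ (C.s k) + β * S.n₂ (C.s k) + γ * S.n₃ (C.s k)) {k : ℝ × ℝ}
    (hk : k ∈ disc t) : 0 ≤ α * S.n₁ (C.s k) + β * S.n₂ (C.s k) + γ * S.n₃ (C.s k) := by
  set l : ℝ × ℝ → ℝ := fun z => γ - α * S.p z - β * S.q z with hl
  have hln : ∀ z, α * S.n₁ z + β * S.n₂ z + γ * S.n₃ z = l z * (S.W z)⁻¹ := fun z => by
    simp only [CMCDisk.n₁, CMCDisk.n₂, CMCDisk.n₃, hl]
    ring
  have hiff : ∀ z, 0 ≤ α * S.n₁ z + β * S.n₂ z + γ * S.n₃ z ↔ 0 ≤ l z := fun z => by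
    rw [hln]
    exact mul_nonneg_iff_of_pos_right (inv_pos.2 (S.W_pos z))
  simp only [hiff] at hΓ ⊢
  set K := C.s '' disc t with hKdef
  have hK : IsCompact K := (isCompact_disc ht.le).image_of_continuousOn
    (C.cont.mono (disc_subset ht htρ))
  have hKr : K ⊆ Metric.ball 0 r := by
    rintro _ ⟨k, hk, rfl⟩
    exact C.mem k (disc_subset ht htρ hk)
  set Γ := C.s '' {k : ℝ × ℝ | k.1 ^ 2 + k.2 ^ 2 = t ^ 2} with hΓdef
  have h_int : ∀ z ∈ K, z ∉ Γ → K ∈ 𝓝 z := by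
    rintro _ ⟨k, hk, rfl⟩ hkΓ
    refine C.image_disc_mem_nhds ht htρ (lt_of_le_of_ne hk fun h => hkΓ ⟨k, h, rfl⟩)
  have hlΓ : ∀ z ∈ Γ, 0 ≤ l z := by
    rintro _ ⟨k, hk, rfl⟩
    exact hΓ k hk
  obtain ⟨ε, hε, hεr⟩ := hK.exists_cthickening_subset_open Metric.isOpen_ball hKr
  have hlc : ContinuousOn l (Metric.ball 0 r) :=
    (continuousOn_const.sub (continuousOn_const.mul S.contDiffOn_p.continuousOn)).sub
      (continuousOn_const.mul S.contDiffOn_q.continuousOn)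
  have huc := (hK.cthickening (r := ε)).uniformContinuousOn_of_continuous (hlc.mono hεr)
  have hz₀ : C.s k ∈ K := ⟨k, hk, rfl⟩
  suffices h : ∀ σ > 0, -(2 * σ) ≤ l (C.s k) by
    by_contra! hneg
    have := h (-l (C.s k) / 4) (by linarith)
    linarith
  intro σ hσ
  obtain ⟨δ, hδ, hδl⟩ := Metric.uniformContinuousOn_iff.1 huc σ hσ
  -- the size `h` of the translation
  set v : ℝ × ℝ := (α, β) with hv
  obtain ⟨h, hh, hhδ, hhε⟩ : ∃ h > 0, h * ‖v‖ < δ ∧ h * ‖v‖ ≤ ε := by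
    refine ⟨min δ ε / (2 * (‖v‖ + 1)), by positivity, ?_, ?_⟩
    all_goals
      have h1 : min δ ε / (2 * (‖v‖ + 1)) * ‖v‖ < min δ ε := by
        rw [div_mul_eq_mul_div, div_lt_iff₀ (by positivity)]
        have : 0 < min δ ε := lt_min hδ hε
        nlinarith [norm_nonneg v]
    · exact h1.trans_le (min_le_left _ _)
    · exact h1.le.trans (min_le_right _ _)
  have hdist : ∀ z, ∀ τ ∈ Icc 0 h, dist (z - τ • v) z ≤ h * ‖v‖ := fun z τ hτ => by
    rw [dist_eq_norm, sub_sub_cancel_left, norm_neg, norm_smul, Real.norm_eq_abs,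
      abs_of_nonneg hτ.1]
    exact mul_le_mul_of_nonneg_right hτ.2 (norm_nonneg v)
  have hmem : ∀ z ∈ K, ∀ τ ∈ Icc 0 h, z - τ • v ∈ Metric.cthickening ε K := fun z hz τ hτ =>
    Metric.mem_cthickening_of_dist_le _ z _ _ hz ((hdist z τ hτ).trans hhε)
  have hhh : h ∈ Icc 0 h := ⟨hh.le, le_rfl⟩
  have hdiff : ∀ z ∈ K, |(S.u (z - h • v) + h * γ - S.u z) - h * l z| ≤ h * σ := fun z hz => by
    have hd : ∀ τ ∈ Icc 0 h, HasDerivAt (fun τ => S.u (z - τ • v) + τ * γ) (l (z - τ • v)) τ := by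
      intro τ hτ
      have h1 : HasDerivAt (fun τ : ℝ => z - τ • v) (-v) τ := by
        simpa using ((hasDerivAt_id τ).smul_const v).const_sub z
      have h2 := (S.hu _ (hεr (hmem z hz τ hτ))).comp_hasDerivAt τ h1
      refine (h2.add ((hasDerivAt_id τ).mul_const γ)).congr_deriv ?_
      simp [hl, hv]
      ring
    obtain ⟨τ, hτ, hτe⟩ := exists_hasDerivAt_eq_slope _ _ hh
      (fun τ hτ => (hd τ hτ).continuousAt.continuousWithinAt)
      (fun τ hτ => hd τ (Ioo_subset_Icc_self hτ))
    have hτ' := Ioo_subset_Icc_self hτ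
    have e : S.u (z - h • v) + h * γ - S.u z = h * l (z - τ • v) := by
      rw [hτe, sub_zero h, mul_div_cancel₀ _ hh.ne']
      simp
    rw [e, ← mul_sub, abs_mul, abs_of_pos hh]
    refine mul_le_mul_of_nonneg_left (le_of_lt ?_) hh.le
    exact hδl _ (hmem z hz τ hτ') z (Metric.self_subset_cthickening K hz)
      ((hdist z τ hτ').trans_lt hhδ)
  have hshift : ∀ {f : ℝ × ℝ → ℝ} {f₁ f₂ : ℝ × ℝ → ℝ},
      (∀ z ∈ Metric.ball 0 r, HasFDerivAt f (lin (f₁ z) (f₂ z)) z) →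
      ∀ z ∈ K, HasFDerivAt (fun z => f (z - h • v)) (lin (f₁ (z - h • v)) (f₂ (z - h • v))) z :=
    fun {f f₁ f₂} hf z hz => by
      have := HasFDerivAt.comp (f := fun z => z - h • v) z (hf _ (hεr (hmem z hz h hhh)))
        ((hasFDerivAt_id z).sub_const (h • v))
      exact this
  have hcomp := comparison hH hK h_int (u₁ := fun z => S.u (z - h • v) + h * γ) (u₂ := S.u)
    (m := -(h * σ)) (fun z hz => (hshift S.hu z hz).add_const _) (hshift S.hp) (hshift S.hq)
    (fun z hz => S.eqn _ (hεr (hmem z hz h hhh))) (fun z hz => S.hu z (hKr hz))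
    (fun z hz => S.hp z (hKr hz)) (fun z hz => S.hq z (hKr hz)) (S.cb.mono hKr) (S.cc.mono hKr)
    (fun z hz => S.eqn z (hKr hz)) (fun z hz hzΓ => by
      have h1 := (abs_le.1 (hdiff z hz)).1
      have h2 := mul_nonneg hh.le (hlΓ z hzΓ)
      linarith) _ hz₀
  have h1 := (abs_le.1 (hdiff _ hz₀)).2
  have h2 : h * (-(2 * σ)) ≤ h * l (C.s k) := by linarith
  exact le_of_mul_le_mul_left h2 hh

end Chart

lemma abs_dot_le {a b c x y z ε : ℝ} (hε : 0 ≤ ε) (h1 : a ^ 2 + b ^ 2 + c ^ 2 = 1)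
    (h2 : x ^ 2 + y ^ 2 + z ^ 2 ≤ ε ^ 2) : |a * x + b * y + c * z| ≤ ε := by
  refine abs_le_of_sq_le_sq ?_ hε
  have : (a * x + b * y + c * z) ^ 2 = (a ^ 2 + b ^ 2 + c ^ 2) * (x ^ 2 + y ^ 2 + z ^ 2) -
    ((a * y - b * x) ^ 2 + (a * z - c * x) ^ 2 + (b * z - c * y) ^ 2) := by ring
  rw [this, h1]
  linarith [sq_nonneg (a * y - b * x), sq_nonneg (a * z - c * x), sq_nonneg (b * z - c * y)]

namespace Chart
variable {H r ρ : ℝ} {S : CMCDisk H r} (C : Chart S ρ)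

/-- If the Gauss map is `ε`-close to a fixed unit vector `N` on a parameter circle, then on the disc
bounded by the circle its third component is close to that of `N`. -/
lemma n₃_close (hH : 0 < H) {t : ℝ} (ht : 0 < t) (htρ : t < ρ) {ε N₁ N₂ N₃ : ℝ} (hε : 0 < ε)
    (hε2 : ε ≤ 1 / 2) (hN : N₁ ^ 2 + N₂ ^ 2 + N₃ ^ 2 = 1) (hN₃ : 0 < N₃)
    (hΓ : ∀ k : ℝ × ℝ, k.1 ^ 2 + k.2 ^ 2 = t ^ 2 → (S.n₁ (C.s k) - N₁) ^ 2 +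
      (S.n₂ (C.s k) - N₂) ^ 2 + (S.n₃ (C.s k) - N₃) ^ 2 ≤ ε ^ 2) {k : ℝ × ℝ} (hk : k ∈ disc t) :
    N₃ - 4 * ε ≤ S.n₃ (C.s k) ∧ S.n₃ (C.s k) ≤ N₃ + 2 * ε := by
  -- on the circle, `N ⬝ n` is within `ε² / 2` of `1`
  have hdot : ∀ k : ℝ × ℝ, k.1 ^ 2 + k.2 ^ 2 = t ^ 2 →
      1 - ε ^ 2 / 2 ≤ N₁ * S.n₁ (C.s k) + N₂ * S.n₂ (C.s k) + N₃ * S.n₃ (C.s k) ∧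
      N₁ * S.n₁ (C.s k) + N₂ * S.n₂ (C.s k) + N₃ * S.n₃ (C.s k) ≤ 1 := fun k hk => by
    have h1 := hΓ k hk
    have h2 := S.n_unit (C.s k)
    constructor
    · linarith
    · linarith [sq_nonneg (S.n₁ (C.s k) - N₁), sq_nonneg (S.n₂ (C.s k) - N₂),
        sq_nonneg (S.n₃ (C.s k) - N₃)]
  have hε3 : ε ^ 2 / 2 ≤ ε / 4 := by nlinarith
  have hN31 : N₃ ≤ 1 := by nlinarith [sq_nonneg N₁, sq_nonneg N₂]
  set ν₁ := S.n₁ (C.s k) with hν₁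
  set ν₂ := S.n₂ (C.s k) with hν₂
  set ν₃ := S.n₃ (C.s k) with hν₃
  have hν : ν₁ ^ 2 + ν₂ ^ 2 + ν₃ ^ 2 = 1 := S.n_unit _
  have hν₃0 : 0 < ν₃ := S.n₃_pos _
  set c := N₁ * ν₁ + N₂ * ν₂ + N₃ * ν₃ with hc
  have hc0 : 0 ≤ c := C.halfspace hH ht htρ (fun k hk => by
    have := (hdot k hk).1
    linarith) hk
  have hc1 : c ≤ 1 := by
    linarith [sq_nonneg (ν₁ - N₁), sq_nonneg (ν₂ - N₂), sq_nonneg (ν₃ - N₃)]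
  -- a linear functional bounded on the circle by a multiple of `N ⬝ n` is so bounded on the disc
  have cone : ∀ {x a b d : ℝ}, a ^ 2 + b ^ 2 + d ^ 2 = 1 → x = a * N₁ + b * N₂ + d * N₃ →
      0 ≤ x + 2 * ε → x ≤ 1 →
      a * ν₁ + b * ν₂ + d * ν₃ ≤ (x + 2 * ε) * c := fun {x a b d} h1 hx hx0 hx1 => by
    have := C.halfspace hH ht htρ (α := (x + 2 * ε) * N₁ - a) (β := (x + 2 * ε) * N₂ - b)
      (γ := (x + 2 * ε) * N₃ - d) (fun k hk => by
        have e1 := (abs_le.1 (abs_dot_le hε.le h1 (hΓ k hk))).2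
        have e2 := mul_le_mul_of_nonneg_left (hdot k hk).1 hx0
        have e3 : (x + 2 * ε) * (ε ^ 2 / 2) ≤ 2 * (ε / 4) :=
          mul_le_mul (by linarith) hε3 (by positivity) (by norm_num)
        linarith) hk
    simp only [← hν₁, ← hν₂, ← hν₃] at this
    rw [hc]
    linarith
  have hc2 : 1 - 2 * ε ≤ c := by
    have h1 := cone (x := c) hν (by rw [hc]; ring) (by linarith) hc1
    by_contra! hlt
    nlinarith
  constructor
  · by_cases hcase : N₃ - 2 * ε ≤ 0
    · linarith
    · push Not at hcase
      have := C.halfspace hH ht htρ (α := -((N₃ - 2 * ε) * N₁)) (β := -((N₃ - 2 * ε) * N₂))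
        (γ := 1 - (N₃ - 2 * ε) * N₃) (fun k hk => by
          have e1 := (abs_le.1 (abs_dot_le (a := 0) (b := 0) (c := 1) hε.le (by norm_num)
            (hΓ k hk))).1
          have e2 := mul_le_mul_of_nonneg_left (hdot k hk).2 hcase.le
          linarith) hk
      have h2 : (N₃ - 2 * ε) * c ≤ ν₃ := by
        rw [hc]
        linarith
      nlinarith
  · have h1 := cone (x := N₃) (a := 0) (b := 0) (d := 1) (by norm_num) (by ring) (by linarith)
      hN31
    nlinarith

end Chart

/-- There is `δ > 0`, depending on `H`, `ρ` and `M` only, such that a solution with `W 0 ≤ M`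
satisfies `W ≤ 2 M` on the image of the parameter disc of radius `δ`. -/
lemma exists_disc_W_le {H ρ M : ℝ} (hH : 0 < H) (hρ : 0 < ρ) (hM : 1 ≤ M) :
    ∃ δ > 0, δ < ρ ∧ ∀ (r : ℝ) (S : CMCDisk H r) (C : Chart S ρ), S.W 0 ≤ M →
      ∀ k ∈ disc δ, S.W (C.s k) ≤ 2 * M := by
  -- on the disc `n₃ ≥ n₃ 0 - 6 ε ≥ 1 / M - 6 ε = 3 / (4 M)`
  set ε := 1 / (24 * M) with hε
  have hM0 : 0 < M := by linarith
  have hε0 : 0 < ε := by positivity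
  have hε2 : ε ≤ 1 / 2 := by
    rw [hε, div_le_div_iff₀ (by positivity) (by norm_num)]
    linarith
  obtain ⟨δ, hδ, hgood⟩ := exists_good_circle (H := H) (μ := ε / 28) hρ (by positivity)
  refine ⟨min δ (ρ / 2), by positivity, (min_le_right _ _).trans_lt (by linarith),
    fun r S C hW k hk => ?_⟩
  obtain ⟨t, ht, hosc⟩ := hgood r S C
  have ht0 : 0 < t := hδ.trans_le ht.1
  have htρ : t < ρ := by linarith [ht.2]
  have hclose : ∀ k ∈ disc t, _ := fun k hk => C.n₃_close (k := k) hH ht0 htρ hε0 hε2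
    (S.n_unit (C.s (-t, 0))) (S.n₃_pos _) (fun k hk => by
      obtain ⟨h1, h2, h3⟩ := hosc k hk
      have g1 := sq_le_sq' (abs_le.1 h1).1 (abs_le.1 h1).2
      have g2 := sq_le_sq' (abs_le.1 h2).1 (abs_le.1 h2).2
      have g3 := sq_le_sq' (abs_le.1 h3).1 (abs_le.1 h3).2
      nlinarith [sq_nonneg ε]) hk
  have hkt : k ∈ disc t := by
    have h1 : min δ (ρ / 2) ≤ t := (min_le_left _ _).trans ht.1
    have h2 : (0 : ℝ) ≤ min δ (ρ / 2) := by positivity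
    exact le_trans hk (pow_le_pow_left₀ h2 h1 2)
  have h0t : (0 : ℝ × ℝ) ∈ disc t := by simp [disc, sq_nonneg]
  have a1 := (hclose k hkt).1
  have a2 := (hclose 0 h0t).2
  rw [C.s0] at a2
  have a3 : 1 / M ≤ S.n₃ 0 := by
    rw [CMCDisk.n₃, ← one_div]
    exact one_div_le_one_div_of_le (S.W_pos 0) hW
  have a4 : 6 * ε = 1 / M - 3 / (4 * M) := by rw [hε]; field_simp; norm_num
  have a5 : 1 / (2 * M) ≤ 3 / (4 * M) := by
    rw [div_le_div_iff₀ (by positivity) (by positivity)]; linarith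
  have a6 : 1 / (2 * M) ≤ 1 / S.W (C.s k) := by
    rw [one_div (S.W _)]
    change _ ≤ S.n₃ (C.s k)
    linarith
  exact (one_div_le_one_div (by positivity) (S.W_pos _)).1 a6

/-! ### Return to the plane -/

namespace Chart
variable {H r ρ : ℝ} {S : CMCDisk H r} (C : Chart S ρ)

/-- The differential of `ψ` is bounded where `W` is. -/
lemma norm_dψ_le {M : ℝ} {z : ℝ × ℝ} (hz : |2 * H * S.u z| ≤ 1 / 2) (hW : S.W z ≤ 2 * M)
    (v : ℝ × ℝ) : ‖(equiv hz : (ℝ × ℝ) →L[ℝ] (ℝ × ℝ)) v‖ ≤ (2 + 4 * M) * ‖v‖ := by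
  have hW0 := S.W_pos z
  have hWs := S.W_sq z
  have hi : 0 ≤ (S.W z)⁻¹ := (inv_pos.2 hW0).le
  have key : ∀ x : ℝ, 0 ≤ x → x ≤ S.W z ^ 2 → 0 ≤ x * (S.W z)⁻¹ ∧ x * (S.W z)⁻¹ ≤ 2 * M := by
    intro x h0 hx
    refine ⟨mul_nonneg h0 hi, ?_⟩
    rw [← div_eq_mul_inv, div_le_iff₀ hW0]
    nlinarith
  have k1 := key (1 + S.p z ^ 2) (by positivity) (by rw [hWs]; linarith [sq_nonneg (S.q z)])
  have k3 := key (1 + S.q z ^ 2) (by positivity) (by rw [hWs]; linarith [sq_nonneg (S.p z)])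
  have k2 := key |S.p z * S.q z| (by positivity) (by
    rw [hWs, abs_mul]
    nlinarith [sq_nonneg (|S.p z| - |S.q z|), sq_abs (S.p z), sq_abs (S.q z)])
  rw [abs_le] at hz
  have b1 : |S.m₁ z| ≤ 2 + 2 * M := by
    rw [CMCDisk.m₁, abs_le]; constructor <;> linarith [hz.1, hz.2, k1.1, k1.2]
  have b3 : |S.m₃ z| ≤ 2 + 2 * M := by
    rw [CMCDisk.m₃, abs_le]; constructor <;> linarith [hz.1, hz.2, k3.1, k3.2]
  have b2 : |S.m₂ z| ≤ 2 * M := by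
    rw [CMCDisk.m₂, abs_mul, abs_of_nonneg hi]; exact k2.2
  have v1 : |v.1| ≤ ‖v‖ := norm_fst_le v
  have v2 : |v.2| ≤ ‖v‖ := norm_snd_le v
  have hM : 0 ≤ M := by linarith
  have e : (equiv (S := S) (abs_le.2 hz) : (ℝ × ℝ) →L[ℝ] (ℝ × ℝ)) v =
    (S.m₁ z * v.1 + S.m₂ z * v.2, S.m₂ z * v.1 + S.m₃ z * v.2) := rfl
  rw [e, Prod.norm_def, max_le_iff]
  simp only [Real.norm_eq_abs]
  constructor
  · calc |S.m₁ z * v.1 + S.m₂ z * v.2| ≤ |S.m₁ z| * |v.1| + |S.m₂ z| * |v.2| := by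
          rw [← abs_mul, ← abs_mul]; exact abs_add_le _ _
      _ ≤ (2 + 2 * M) * ‖v‖ + 2 * M * ‖v‖ := by gcongr
      _ = (2 + 4 * M) * ‖v‖ := by ring
  · calc |S.m₂ z * v.1 + S.m₃ z * v.2| ≤ |S.m₂ z| * |v.1| + |S.m₃ z| * |v.2| := by
          rw [← abs_mul, ← abs_mul]; exact abs_add_le _ _
      _ ≤ 2 * M * ‖v‖ + (2 + 2 * M) * ‖v‖ := by gcongr
      _ = (2 + 4 * M) * ‖v‖ := by ring

/-- Bounds for `W` on a parameter disc give bounds on a disc of the plane: the segment from the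
origin to `Q` stays in the image of the parameter disc since `ψ` is Lipschitz there. -/
lemma W_le_of_disc {M δ : ℝ} (hM : 0 < M) (hδ : 0 < δ) (hδρ : δ < ρ)
    (hW : ∀ k ∈ disc δ, S.W (C.s k) ≤ 2 * M) {Q : ℝ × ℝ} (hQ : (2 + 4 * M) * ‖Q‖ < δ / 2) :
    S.W Q ≤ 2 * M := by
  set B : Set (ℝ × ℝ) := Metric.closedBall 0 (δ / 2) with hB
  have hBρ : B ⊆ Metric.ball 0 ρ := Metric.closedBall_subset_ball (by linarith)
  have hBδ : B ⊆ disc δ := fun k hk => by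
    rw [hB, mem_closedBall_zero_iff, Prod.norm_def, max_le_iff] at hk
    simp only [Real.norm_eq_abs] at hk
    have h1 := sq_le_sq' (abs_le.1 hk.1).1 (abs_le.1 hk.1).2
    have h2 := sq_le_sq' (abs_le.1 hk.2).1 (abs_le.1 hk.2).2
    change k.1 ^ 2 + k.2 ^ 2 ≤ δ ^ 2
    nlinarith
  have hK : IsClosed (C.s '' B) :=
    ((isCompact_closedBall _ _).image_of_continuousOn (C.cont.mono hBρ)).isClosed
  set γ : ℝ → ℝ × ℝ := fun τ => τ • Q with hγ
  have hγc : Continuous γ := by fun_prop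
  have hγd : ∀ τ, HasDerivAt γ Q τ := fun τ => by
    simpa using (hasDerivAt_id τ).smul_const Q
  set L := (2 + 4 * M) * ‖Q‖ with hL
  have hL0 : 0 ≤ L := by positivity
  set F : Set ℝ := {τ | γ τ ∈ C.s '' B} with hF
  have hFc : IsClosed F := hK.preimage hγc
  have hFd : ∀ τ ∈ F, ∃ d : ℝ × ℝ, HasDerivAt (fun τ => C.ψ (γ τ)) d τ ∧ ‖d‖ ≤ L := by
    rintro τ ⟨k, hk, hkτ⟩
    have hkρ := hBρ hk
    have hst := (C.hasStrictFDerivAt_ψ (C.mem k hkρ) (C.small k hkρ)).hasFDerivAt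
    exact ⟨_, hst.comp_hasDerivAt_of_eq τ (hγd τ) hkτ, norm_dψ_le _ (hW k (hBδ hk)) Q⟩
  set T : Set ℝ := {τ ∈ F | ‖C.ψ (γ τ)‖ ≤ L * τ} with hT
  have hTc : IsClosed T := hFc.isClosed_le
    (fun τ hτ => by
      obtain ⟨d, hd, -⟩ := hFd τ hτ
      exact hd.continuousAt.norm.continuousWithinAt) (by fun_prop)
  have h0 : (0 : ℝ) ∈ T := by
    refine ⟨⟨0, Metric.mem_closedBall_self (by positivity), ?_⟩, ?_⟩
    · simp [hγ, C.s0]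
    · simp [hγ, ψ, C.ψ0.1, C.ψ0.2]
  have hsub : Icc (0 : ℝ) 1 ⊆ T := by
    refine IsClosed.Icc_subset_of_forall_exists_gt (hTc.inter isClosed_Icc) h0 ?_
    rintro τ ⟨⟨⟨k, hk, hkτ⟩, hτL⟩, hτ⟩ y hy
    have hkρ := hBρ hk
    have hψk : C.ψ (γ τ) = k := by rw [← hkτ, C.ψ_s hkρ]
    have hklt : ‖C.ψ (γ τ)‖ < δ / 2 := by
      have : L * τ ≤ L * 1 := mul_le_mul_of_nonneg_left hτ.2.le hL0
      linarith
    have hcψ : ContinuousAt C.ψ (γ τ) := by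
      rw [← hkτ]
      exact (C.hasStrictFDerivAt_ψ (C.mem k hkρ) (C.small k hkρ)).continuousAt
    have hev : ∀ᶠ z in 𝓝 (γ τ), z ∈ C.s '' B := by
      have h1 := C.eventually_s_ψ hkρ
      rw [hkτ] at h1
      filter_upwards [h1, hcψ.norm.eventually_lt continuousAt_const hklt] with z hz hz'
      exact ⟨C.ψ z, by rw [hB, mem_closedBall_zero_iff]; exact hz'.le, hz.2⟩
    obtain ⟨ε, hε, hεF⟩ := Metric.eventually_nhds_iff.1 (hγc.continuousAt.eventually hev)
    have hy' : τ < y := hy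
    set σ := min y (τ + ε / 2) with hσ
    have hτσ : τ < σ := lt_min hy' (by linarith)
    have hall : ∀ x ∈ Icc τ σ, x ∈ F := fun x hx => by
      refine hεF ?_
      have : x ≤ τ + ε / 2 := hx.2.trans (min_le_right _ _)
      rw [Real.dist_eq, abs_of_nonneg (by linarith [hx.1])]
      linarith
    choose! d hd hdL using hFd
    have hmv := norm_image_sub_le_of_norm_deriv_le_segment' (f := fun τ => C.ψ (γ τ)) (f' := d)
      (C := L) (a := τ) (b := σ) (fun x hx => (hd x (hall x hx)).hasDerivWithinAt)
      (fun x hx => hdL x (hall x (Ico_subset_Icc_self hx))) σ ⟨hτσ.le, le_rfl⟩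
    refine ⟨σ, ⟨hall σ ⟨hτσ.le, le_rfl⟩, ?_⟩, hτσ, min_le_left _ _⟩
    have := norm_le_norm_sub_add (C.ψ (γ σ)) (C.ψ (γ τ))
    have hτL' : ‖C.ψ (γ τ)‖ ≤ L * τ := hτL
    nlinarith
  obtain ⟨⟨k, hk, hkQ⟩, -⟩ := hsub (right_mem_Icc.2 zero_le_one)
  have : C.s k = Q := by rw [hkQ]; simp [hγ]
  rw [← this]
  exact hW k (hBδ hk)

end Chart

/-- The gradient estimate for normalised solutions. -/
lemma exists_radius {H r M : ℝ} (hH : 0 < H) (hr : 0 < r) (hM : 1 ≤ M) :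
    ∃ R > 0, ∀ S : CMCDisk H r, S.W 0 ≤ M → ∀ Q : ℝ × ℝ, ‖Q‖ < R → S.W Q ≤ 2 * M := by
  obtain ⟨ρ, hρ, h1, h2⟩ : ∃ ρ > 0, 3 * ρ < r ∧ 3 * ρ * (4 * H) < 1 := by
    refine ⟨min (r / 4) (1 / (16 * H)), by positivity, ?_, ?_⟩
    · have := min_le_left (r / 4) (1 / (16 * H))
      linarith
    · have := min_le_right (r / 4) (1 / (16 * H))
      have h3 : 1 / (16 * H) * H = 1 / 16 := by field_simp
      have := mul_le_mul_of_nonneg_right this hH.le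
      linarith
  obtain ⟨δ, hδ, hδρ, hW⟩ := exists_disc_W_le hH hρ hM
  refine ⟨δ / (2 * (2 + 4 * M)), by positivity, fun S hS Q hQ => ?_⟩
  obtain ⟨C⟩ := exists_chart S hH hρ h1 h2
  refine C.W_le_of_disc (by linarith) hδ hδρ (hW r S C hS) ?_
  rw [lt_div_iff₀ (by positivity)] at hQ
  linarith

/-! ### Restricting a solution to a square -/

lemma rpow_three_halves {x : ℝ} (hx : 0 ≤ x) : x ^ ((3 : ℝ) / 2) = √x ^ 3 := by
  rw [Real.sqrt_eq_rpow, ← Real.rpow_natCast, ← Real.rpow_mul hx]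
  norm_num

lemma hasFDerivAt_pd {f : ℝ × ℝ → ℝ} {z : ℝ × ℝ} (hf : DifferentiableAt ℝ f z) :
    HasFDerivAt f (lin (pdx f z) (pdy f z)) z := by
  rw [pdx, pdy, ← eq_lin]
  exact hf.hasFDerivAt

lemma contDiffOn_pd {Ω : Set (ℝ × ℝ)} (hΩ : IsOpen Ω) {u : ℝ × ℝ → ℝ} (hu : ContDiffOn ℝ 2 u Ω) :
    ContDiffOn ℝ 1 (pdx u) Ω ∧ ContDiffOn ℝ 1 (pdy u) Ω := by
  have h := hu.fderiv_of_isOpen hΩ (m := 1) (by norm_num)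
  exact ⟨h.clm_apply contDiffOn_const, h.clm_apply contDiffOn_const⟩

lemma pdx_pdy_comm {Ω : Set (ℝ × ℝ)} (hΩ : IsOpen Ω) {u : ℝ × ℝ → ℝ} (hu : ContDiffOn ℝ 2 u Ω)
    {z : ℝ × ℝ} (hz : z ∈ Ω) : pdx (pdy u) z = pdy (pdx u) z := by
  have hd : DifferentiableAt ℝ (fderiv ℝ u) z :=
    ((hu.fderiv_of_isOpen hΩ (m := 1) (by norm_num)).differentiableOn one_ne_zero).differentiableAt
      (hΩ.mem_nhds hz)
  have e : ∀ v w : ℝ × ℝ, fderiv ℝ (fun q => fderiv ℝ u q v) z w =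
      fderiv ℝ (fderiv ℝ u) z w v := fun v w => by
    have := (hd.hasFDerivAt.clm_apply (hasFDerivAt_const v z)).fderiv
    rw [this]
    simp
  have hs := (hu.contDiffAt (hΩ.mem_nhds hz)).isSymmSndFDerivAt (by simp)
  change fderiv ℝ (fun q => fderiv ℝ u q (0, 1)) z (1, 0) =
    fderiv ℝ (fun q => fderiv ℝ u q (1, 0)) z (0, 1)
  rw [e, e]
  exact hs _ _

/-- The restriction of a solution to a square about `P`, translated so that `P` and `u P` become
the origin. -/
def ofSolution {H r : ℝ} {Ω : Set (ℝ × ℝ)} (hΩ : IsOpen Ω) {u : ℝ × ℝ → ℝ}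
    (hu : IsCMCSolution H Ω u) (P : ℝ × ℝ) (hP : ∀ z ∈ Metric.ball (0 : ℝ × ℝ) r, z + P ∈ Ω) :
    CMCDisk H r where
  u z := u (z + P) - u P
  p z := pdx u (z + P)
  q z := pdy u (z + P)
  a z := pdx (pdx u) (z + P)
  b z := pdy (pdx u) (z + P)
  c z := pdy (pdy u) (z + P)
  hu z hz := by
    have h1 := hasFDerivAt_pd ((hu.1.differentiableOn two_ne_zero).differentiableAt
      (hΩ.mem_nhds (hP z hz)))
    exact ((hasFDerivAt_comp_add_right P).2 h1).sub_const _
  hp z hz := by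
    have h1 := hasFDerivAt_pd (((contDiffOn_pd hΩ hu.1).1.differentiableOn
      one_ne_zero).differentiableAt (hΩ.mem_nhds (hP z hz)))
    exact (hasFDerivAt_comp_add_right P).2 h1
  hq z hz := by
    have h1 := hasFDerivAt_pd (((contDiffOn_pd hΩ hu.1).2.differentiableOn
      one_ne_zero).differentiableAt (hΩ.mem_nhds (hP z hz)))
    rw [pdx_pdy_comm hΩ hu.1 (hP z hz)] at h1
    exact (hasFDerivAt_comp_add_right P).2 h1
  ca := (continuousOn_pd hΩ (contDiffOn_pd hΩ hu.1).1).1.comp (by fun_prop) hP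
  cb := (continuousOn_pd hΩ (contDiffOn_pd hΩ hu.1).1).2.comp (by fun_prop) hP
  cc := (continuousOn_pd hΩ (contDiffOn_pd hΩ hu.1).2).2.comp (by fun_prop) hP
  eqn z hz := by
    rw [← rpow_three_halves (by positivity)]
    exact hu.2 _ (hP z hz)
  u0 := by simp

end CMCGradient

/-- interior gradient estimate — there is `R = R(H, M, r₀) > 0` such that
`W_u ≤ M` at a point `P` at distance `≥ r₀` from the boundary implies `W_u ≤ 2M` on the
disk of radius `R` around `P`. -/
theorem stmt_2 (H r₀ M : ℝ) (hH : 0 < H) (hr₀ : 0 < r₀) (hM : 1 ≤ M) :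
    ∃ R > 0, ∀ (Ω : Set (ℝ × ℝ)), IsOpen Ω → ∀ u : ℝ × ℝ → ℝ,
      IsCMCSolution H Ω u → ∀ P : ℝ × ℝ,
      {q : ℝ × ℝ | enorm2 (q - P) ≤ r₀} ⊆ Ω → Wgraph u P ≤ M →
      ∀ Q : ℝ × ℝ, enorm2 (Q - P) < R → Wgraph u Q ≤ 2 * M := by
  obtain ⟨R, hR, key⟩ := CMCGradient.exists_radius (r := r₀ / 2) hH (by positivity) hM
  refine ⟨R, hR, fun Ω hΩ u hu P hP hW Q hQ => ?_⟩
  have hP' : ∀ z ∈ Metric.ball (0 : ℝ × ℝ) (r₀ / 2), z + P ∈ Ω := fun z hz => by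
    refine hP ?_
    rw [mem_ball_zero_iff, Prod.norm_def, max_lt_iff] at hz
    simp only [Real.norm_eq_abs] at hz
    have h1 := sq_le_sq' (abs_lt.1 hz.1).1.le (abs_lt.1 hz.1).2.le
    have h2 := sq_le_sq' (abs_lt.1 hz.2).1.le (abs_lt.1 hz.2).2.le
    change enorm2 (z + P - P) ≤ r₀
    rw [add_sub_cancel_right, enorm2]
    exact Real.sqrt_le_iff.2 ⟨hr₀.le, by nlinarith⟩
  have hnorm : ‖Q - P‖ < R := by
    refine lt_of_le_of_lt ?_ hQ
    rw [Prod.norm_def, max_le_iff]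
    exact ⟨Real.abs_le_sqrt (by linarith [sq_nonneg (Q - P).2]),
      Real.abs_le_sqrt (by linarith [sq_nonneg (Q - P).1])⟩
  have := key (CMCGradient.ofSolution hΩ hu P hP') (by
    simpa [CMCGradient.CMCDisk.W, CMCGradient.ofSolution, Wgraph] using hW) (Q - P) hnorm
  simpa [CMCGradient.CMCDisk.W, CMCGradient.ofSolution, Wgraph] using this
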